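/- The field extension ℚ^cyc(j(S)) / ℚ^cyc is abelian, where j(S) is the set of all singular moduli (j-invariants of CM points of the upper half plane) and ℚ^cyc = ℚ(all roots of unity). -/

import Mathlib

set_option synthInstance.maxHeartbeats 800000
set_option maxHeartbeats 1600000
noncomputable section
open UpperHalfPlane Matrix MatrixGroups Classical

namespace JPaper

/-! ### The group `G = GL₂⁺(ℚ)` modulo scalars and its action on `ℍ` -/

/-- `GL₂⁺(ℚ)`, the group of 2×2 rational matrices with positive determinant. -/
abbrev GL2QPos : Type := Matrix.GLPos (Fin 2) ℚ

lemma map_mem_glpos (g : GL2QPos) :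
    (Matrix.GeneralLinearGroup.map (algebraMap ℚ ℝ) : GL (Fin 2) ℚ →* GL (Fin 2) ℝ) g ∈
      Matrix.GLPos (Fin 2) ℝ := by
  have hg := g.2
  rw [Matrix.mem_glpos] at hg ⊢
  rw [Matrix.GeneralLinearGroup.val_det_apply] at hg ⊢
  show (0:ℝ) < Matrix.det _
  have : ((Matrix.GeneralLinearGroup.map (algebraMap ℚ ℝ) (g : GL (Fin 2) ℚ) :
      GL (Fin 2) ℝ) : Matrix (Fin 2) (Fin 2) ℝ) = ((g : GL (Fin 2) ℚ) :
      Matrix (Fin 2) (Fin 2) ℚ).map (algebraMap ℚ ℝ) := rfl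
  rw [this, ← RingHom.mapMatrix_apply, ← RingHom.map_det]
  simpa using (Rat.cast_pos (K := ℝ)).mpr hg

/-- The homomorphism `GL₂⁺(ℚ) →* GL₂⁺(ℝ)` induced by `ℚ ⊆ ℝ`. -/
def toGLPosR : GL2QPos →* Matrix.GLPos (Fin 2) ℝ :=
  MonoidHom.codRestrict
    ((Matrix.GeneralLinearGroup.map (algebraMap ℚ ℝ)).comp (Matrix.GLPos (Fin 2) ℚ).subtype)
    (Matrix.GLPos (Fin 2) ℝ) (fun g => map_mem_glpos g)

/-- `G := GL₂⁺(ℚ)ᵃᵈ`, i.e. `GL₂⁺(ℚ)` modulo its centre (the scalar matrices). -/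
abbrev GQ : Type := GL2QPos ⧸ Subgroup.center GL2QPos

/-- The action of an element of `G = GL₂⁺(ℚ)` modulo scalars on the upper half plane,
via a choice of representative (the centre acts trivially on `ℍ`, so this recovers the
natural action by Möbius transformations). -/
def gqSmul (g : GQ) (τ : ℍ) : ℍ := toGLPosR g.out • τ

/-- The image of `SL₂(ℤ)` in `GL₂⁺(ℚ)`. -/
def sl2ZtoGLQ (γ : Matrix.SpecialLinearGroup (Fin 2) ℤ) : GL2QPos :=
  ⟨Matrix.SpecialLinearGroup.toGL
      (Matrix.SpecialLinearGroup.map (Int.castRingHom ℚ) γ), by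
    rw [Matrix.mem_glpos, Matrix.GeneralLinearGroup.val_det_apply]
    show (0:ℚ) < Matrix.det _
    have : ((Matrix.SpecialLinearGroup.toGL
        (Matrix.SpecialLinearGroup.map (Int.castRingHom ℚ) γ) : GL (Fin 2) ℚ) :
        Matrix (Fin 2) (Fin 2) ℚ).det = 1 :=
      (Matrix.SpecialLinearGroup.map (Int.castRingHom ℚ) γ).2
    rw [this]; norm_num⟩

/-- The image of `SL₂(ℤ)` in `G = GL₂⁺(ℚ)` modulo scalars. -/
def sl2ZtoGQ (γ : Matrix.SpecialLinearGroup (Fin 2) ℤ) : GQ :=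
  QuotientGroup.mk (sl2ZtoGLQ γ)

/-! ### The modular `j`-function and special points -/

/-- The classical modular `j`-function on the upper half plane, defined via the
Eisenstein series `g₂, g₃` of the lattice `ℤτ + ℤ`. -/
def jFunction (τ : ℍ) : ℂ :=
  let g2 : ℂ := 60 * ∑' p : ℤ × ℤ,
    if p = 0 then 0 else (((p.1 : ℂ) * (τ : ℂ) + (p.2 : ℂ)) ^ 4)⁻¹
  let g3 : ℂ := 140 * ∑' p : ℤ × ℤ,
    if p = 0 then 0 else (((p.1 : ℂ) * (τ : ℂ) + (p.2 : ℂ)) ^ 6)⁻¹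
  1728 * g2 ^ 3 / (g2 ^ 3 - 27 * g3 ^ 2)

/-- A point of `ℍ` is special (a CM point) if it is fixed by some nontrivial element
of `G = GL₂⁺(ℚ)` modulo scalars. -/
def IsSpecial (τ : ℍ) : Prop := ∃ g : GQ, g ≠ 1 ∧ gqSmul g τ = τ

/-- The set of special points of `ℍ`. -/
def SpecialSet : Set ℍ := {τ | IsSpecial τ}

/-- The set `j(S) ⊆ ℂ` of singular moduli, i.e. `j`-values of special points. -/
def jSpecialValues : Set ℂ := jFunction '' SpecialSet

/-- The subfield `ℚ(j(S))` of `ℂ` generated by the singular moduli. -/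
def QjS : Subfield ℂ := Subfield.closure jSpecialValues

/-- An integral matrix is primitive if the gcd of its entries is 1. -/
def IsPrimitiveIntMatrix (A : Matrix (Fin 2) (Fin 2) ℤ) : Prop :=
  Int.gcd (Int.gcd (A 0 0) (A 0 1)) (Int.gcd (A 1 0) (A 1 1)) = 1

/-- `G_N`: the set of elements of `G` which, after multiplying through by an integer to
clear denominators in all entries, have determinant `N`. -/
def GQdet (N : ℕ) : Set GQ :=
  {g | ∃ A : Matrix (Fin 2) (Fin 2) ℤ, IsPrimitiveIntMatrix A ∧ A.det = (N : ℤ) ∧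
    ∃ c : ℚ, ((g.out : GL (Fin 2) ℚ) : Matrix (Fin 2) (Fin 2) ℚ) =
      c • A.map (fun x => (x : ℚ))}

/-- The `N`-th classical modular polynomial `Φ_N ∈ ℤ[X,Y]`, characterised by the property
that `Φ_N(z,w) = 0` iff `z` and `w` are the `j`-invariants of elliptic curves related by a
cyclic `N`-isogeny, i.e. iff `w = j(gτ)`, `z = j(τ)` for some `τ ∈ ℍ` and `g ∈ G_N`. -/
def modularPoly (N : ℕ) : MvPolynomial (Fin 2) ℤ :=
  if h : ∃ P : MvPolynomial (Fin 2) ℤ, P ≠ 0 ∧ ∀ z w : ℂ,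
      (MvPolynomial.aeval ![z, w]) P = 0 ↔
        ∃ (τ : ℍ) (g : GQ), g ∈ GQdet N ∧ jFunction τ = z ∧ jFunction (gqSmul g τ) = w
  then h.choose else 0


/-- The set of all roots of unity in `ℂ`. -/
def rootsOfUnitySet : Set ℂ := {z | ∃ n : ℕ, 0 < n ∧ z ^ n = 1}

/-- `ℚ^cyc`, the subfield of `ℂ` generated by all roots of unity. -/
def Qcyc : Subfield ℂ := Subfield.closure rootsOfUnitySet

/-- `ℚ^cyc(j(S))`, the subfield of `ℂ` generated by all roots of unity together with all
singular moduli. -/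
def QcycJS : Subfield ℂ := Subfield.closure (rootsOfUnitySet ∪ jSpecialValues)

lemma Qcyc_le_QcycJS : Qcyc ≤ QcycJS :=
  Subfield.closure_mono Set.subset_union_left

noncomputable instance : Algebra ↥Qcyc ↥QcycJS :=
  (Subfield.inclusion Qcyc_le_QcycJS).toAlgebra

end JPaper

/-!
An automorphism `σ` of `ℂ` sends a lattice `L` to the lattice `L^σ` with invariants `σ g₂(L)` and
`σ g₃(L)`, and `j(L^σ) = σ j(L)`. An inclusion `L ⊆ L'` amounts to an algebraic relation between
`℘_L` and `℘_L'`, equivalently between the Taylor series at `0` of their reciprocals. A differential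
equation over `ℚ(g₂, g₃)` determines these series, so `σ` carries inclusions to inclusions, and
likewise `αL` to `σ(α) L^σ`.

Let `O` be the quadratic order of the multipliers of `L`, and suppose that `σ` fixes its fraction
field. Then `L` is an invertible `O`-module, and transporting inclusions in both directions gives
`L^σ = L O^σ`: the automorphism acts by multiplication with a lattice depending on `σ` and `O` only.
Since multiplication of modules is commutative, two such automorphisms commute on `j(L)`, and their
images of `j(L)` are again singular moduli.

Gauss sums place the imaginary quadratic fields inside `ℚ^cyc`, so this applies to all automorphisms
over `ℚ^cyc`. These preserve the countable field `ℚ^cyc(j(S))`, which is therefore algebraic, a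
transcendental number having uncountably many conjugates, and normal over `ℚ^cyc`.
-/

namespace SingularModuli

open Filter Topology Polynomial
open scoped PeriodPair PowerSeries

/-! ### Taylor series at the origin -/

section TaylorSeries

variable {𝕜 : Type*} [NontriviallyNormedField 𝕜]

/-- The Taylor series of `f` at the origin. -/
def taylorSeries (f : 𝕜 → 𝕜) : 𝕜⟦X⟧ :=
  .mk fun n => iteratedDeriv n f 0 / n.factorial

@[simp]
lemma coeff_taylorSeries (f : 𝕜 → 𝕜) (n : ℕ) :
    (taylorSeries f).coeff n = iteratedDeriv n f 0 / n.factorial :=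
  PowerSeries.coeff_mk _ _

@[simp]
lemma taylorSeries_const (c : 𝕜) : taylorSeries (fun _ => c) = PowerSeries.C c := by
  ext n
  rcases n with _ | n <;> simp [iteratedDeriv_const, PowerSeries.coeff_C]

lemma taylorSeries_deriv [CharZero 𝕜] (f : 𝕜 → 𝕜) :
    taylorSeries (deriv f) = d⁄dX 𝕜 (taylorSeries f) := by
  ext n
  have : (n.factorial : 𝕜) ≠ 0 := mod_cast n.factorial_ne_zero
  have : (n + 1 : 𝕜) ≠ 0 := mod_cast n.succ_ne_zero
  simp only [coeff_taylorSeries, PowerSeries.coeff_derivative, ← iteratedDeriv_succ',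
    Nat.factorial_succ, Nat.cast_mul, Nat.cast_succ]
  field_simp

variable [CompleteSpace 𝕜] {f g : 𝕜 → 𝕜}

lemma taylorSeries_add (hf : AnalyticAt 𝕜 f 0) (hg : AnalyticAt 𝕜 g 0) :
    taylorSeries (fun z => f z + g z) = taylorSeries f + taylorSeries g := by
  ext n
  simp [iteratedDeriv_fun_add hf.contDiffAt hg.contDiffAt, add_div]

variable [CharZero 𝕜]

lemma taylorSeries_mul (hf : AnalyticAt 𝕜 f 0) (hg : AnalyticAt 𝕜 g 0) :
    taylorSeries (fun z => f z * g z) = taylorSeries f * taylorSeries g := by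
  ext n
  rw [PowerSeries.coeff_mul, Finset.Nat.sum_antidiagonal_eq_sum_range_succ_mk, coeff_taylorSeries,
    iteratedDeriv_fun_mul hf.contDiffAt hg.contDiffAt, Finset.sum_div]
  refine Finset.sum_congr rfl fun i hi => ?_
  have (k : ℕ) : (k.factorial : 𝕜) ≠ 0 := mod_cast k.factorial_ne_zero
  simp only [coeff_taylorSeries, Nat.cast_choose 𝕜 (Finset.mem_range_succ_iff.mp hi)]
  field_simp [this]

lemma taylorSeries_polynomial_eval (hf : AnalyticAt 𝕜 f 0) (P : 𝕜[X]) :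
    taylorSeries (fun z => P.eval (f z)) = aeval (taylorSeries f) P := by
  have hP (P : 𝕜[X]) : AnalyticAt 𝕜 (fun z => P.eval (f z)) 0 := by
    simpa using hf.aeval_polynomial P
  induction P using Polynomial.induction_on' with
  | add P Q ihP ihQ => simp [taylorSeries_add (hP P) (hP Q), ihP, ihQ]
  | monomial n c =>
    induction n with
    | zero => simp [PowerSeries.algebraMap_eq]
    | succ n ih =>
      simp only [eval_monomial, aeval_monomial, pow_succ, ← mul_assoc] at ih ⊢
      rw [taylorSeries_mul (by fun_prop) hf, ih]

lemma taylorSeries_eq_iff (hf : AnalyticAt 𝕜 f 0) (hg : AnalyticAt 𝕜 g 0) :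
    taylorSeries f = taylorSeries g ↔ f =ᶠ[𝓝[≠] 0] g := by
  rw [ContinuousAt.eventuallyEq_nhds_iff_eventuallyEq_nhdsNE hf.continuousAt hg.continuousAt]
  refine ⟨fun h => ?_, fun h => ?_⟩
  · have hcoeff (n : ℕ) :
        iteratedDeriv n f 0 / n.factorial = iteratedDeriv n g 0 / n.factorial := by
      simpa using congrArg (PowerSeries.coeff n) h
    have hf' := hf.hasFPowerSeriesAt
    simp only [hcoeff] at hf'
    filter_upwards [hf'.eventually_hasSum_sub, hg.hasFPowerSeriesAt.eventually_hasSum_sub]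
      with z hfz hgz using hfz.unique hgz
  · ext n
    simp [h.iteratedDeriv_eq]

end TaylorSeries

/-! ### A second order differential equation for formal power series -/

lemma eq_of_derivative_derivative_eq_aeval {R : Type*} [CommRing R] [IsDomain R] [CharZero R]
    (F : R[X]) {u v : R⟦X⟧}
    (hu : d⁄dX R (d⁄dX R u) = aeval u F)
    (hv : d⁄dX R (d⁄dX R v) = aeval v F)
    (h₀ : u.coeff 0 = v.coeff 0) (h₁ : u.coeff 1 = v.coeff 1) : u = v := by
  suffices h : ∀ n, PowerSeries.X ^ n ∣ u - v by
    ext n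
    simpa [sub_eq_zero] using PowerSeries.X_pow_dvd_iff.mp (h (n + 1)) n n.lt_succ_self
  intro n
  induction n using Nat.twoStepInduction with
  | zero => simp
  | one => simpa [PowerSeries.X_dvd_iff, sub_eq_zero] using h₀
  | more n ih _ =>
    have hF : PowerSeries.X ^ n ∣ d⁄dX R (d⁄dX R (u - v)) := by
      rw [map_sub, map_sub, hu, hv]
      simpa only [eval_map_algebraMap] using
        ih.trans (sub_dvd_eval_sub u v (F.map (algebraMap R R⟦X⟧)))
    rw [PowerSeries.X_pow_dvd_iff] at hF ⊢
    rintro (_ | _ | m) hm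
    · rw [map_sub, h₀, sub_self]
    · simp [h₁]
    · have := hF m (by omega)
      simp only [PowerSeries.coeff_derivative, mul_eq_zero] at this
      norm_cast at this
      simpa using this

lemma two_smul_derivative_derivative_eq_aeval {R : Type*} [CommRing R] [IsDomain R]
    {Q : R[X]} {u : R⟦X⟧} (hu : d⁄dX R u ^ 2 = aeval u Q) (hu' : d⁄dX R u ≠ 0) :
    (2 : R) • d⁄dX R (d⁄dX R u) = aeval u Q.derivative := by
  have h := congrArg (d⁄dX R) hu
  rw [Derivation.map_aeval, Derivation.leibniz_pow] at h
  refine mul_right_cancel₀ hu' ?_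
  simpa [← ofNat_smul_eq_nsmul R, mul_comm, mul_left_comm] using h

lemma eq_of_derivative_sq_eq_aeval {K : Type*} [Field K] [CharZero K] {Q : K[X]}
    (hQ : Q.coeff 0 = 0) {u v : K⟦X⟧} (hu : d⁄dX K u ^ 2 = aeval u Q)
    (hv : d⁄dX K v ^ 2 = aeval v Q)
    (hu₀ : u.constantCoeff = 0) (hv₀ : v.constantCoeff = 0) (hu' : u ≠ 0) (hv' : v ≠ 0) :
    u = v := by
  have second {w : K⟦X⟧} (hw : d⁄dX K w ^ 2 = aeval w Q)
      (hw₀ : w.constantCoeff = 0) (hw' : w ≠ 0) :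
      d⁄dX K (d⁄dX K w) = aeval w (C (1 / 2) * Q.derivative) := by
    have hne : d⁄dX K w ≠ 0 := fun h =>
      hw' (PowerSeries.derivative.ext (by simpa using h) (by simpa using hw₀))
    rw [map_mul, ← two_smul_derivative_derivative_eq_aeval hw hne, aeval_C, ← Algebra.smul_def,
      smul_smul]
    norm_num
  have first {w : K⟦X⟧} (hw : d⁄dX K w ^ 2 = aeval w Q) (hw₀ : w.constantCoeff = 0) :
      w.coeff 1 = 0 := by
    have h := congrArg PowerSeries.constantCoeff hw
    rw [aeval_def, hom_eval₂, hw₀, eval₂_at_zero, hQ, map_zero, map_pow, sq_eq_zero_iff,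
      ← PowerSeries.coeff_zero_eq_constantCoeff_apply, PowerSeries.coeff_derivative] at h
    simpa using h
  exact eq_of_derivative_derivative_eq_aeval _ (second hu hu₀ hu') (second hv hv₀ hv')
    (by simp [hu₀, hv₀]) (by rw [first hu hu₀, first hv hv₀])

/-! ### The power series expansion of `1 / ℘` -/

/-- The reciprocal `1 / ℘` of the Weierstrass function, a local coordinate at the origin up to
squares. Mathlib's junk value `℘[L] 0 = 0` gives it its correct value `0` at the origin. -/
def invWeierstrassP (L : PeriodPair) (z : ℂ) : ℂ := (℘[L] z)⁻¹

section InvWeierstrassP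

variable (L : PeriodPair)

lemma meromorphicOrderAt_invWeierstrassP_zero :
    meromorphicOrderAt (invWeierstrassP L) 0 = 2 := by
  change meromorphicOrderAt (℘[L])⁻¹ 0 = 2
  rw [meromorphicOrderAt_inv, L.order_weierstrassP 0 L.lattice.zero_mem]
  rfl

@[simp]
lemma invWeierstrassP_zero : invWeierstrassP L 0 = 0 := by
  simp [invWeierstrassP]

@[fun_prop]
lemma analyticAt_invWeierstrassP_zero : AnalyticAt ℂ (invWeierstrassP L) 0 :=
  .of_meromorphicOrderAt_pos (by simp [meromorphicOrderAt_invWeierstrassP_zero]) (by simp)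

lemma eventually_notMem_lattice : ∀ᶠ z in 𝓝[≠] (0 : ℂ), z ∉ L.lattice := by
  filter_upwards [nhdsWithin_le_nhds (L.compl_lattice_sdiff_singleton_mem_nhds 0),
    self_mem_nhdsWithin] with z hz hz₀
  simp_all

lemma eventually_weierstrassP_ne_zero : ∀ᶠ z in 𝓝[≠] (0 : ℂ), ℘[L] z ≠ 0 :=
  (meromorphicOrderAt_ne_top_iff_eventually_ne_zero (L.meromorphic_weierstrassP 0)).mp <| by
    simp [L.order_weierstrassP 0 L.lattice.zero_mem]

lemma deriv_invWeierstrassP_sq_eventuallyEq :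
    (fun z => deriv (invWeierstrassP L) z ^ 2) =ᶠ[𝓝[≠] 0] fun z =>
      4 * invWeierstrassP L z - L.g₂ * invWeierstrassP L z ^ 3 -
        L.g₃ * invWeierstrassP L z ^ 4 := by
  filter_upwards [eventually_notMem_lattice L, eventually_weierstrassP_ne_zero L] with z hz hz₀
  have hd : HasDerivAt ℘[L] (℘'[L] z) z := by
    rw [← L.deriv_weierstrassP]
    exact (L.analyticOnNhd_weierstrassP z hz).differentiableAt.hasDerivAt
  rw [show deriv (invWeierstrassP L) z = _ from (hd.fun_inv hz₀).deriv, invWeierstrassP, div_pow,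
    neg_sq, L.derivWeierstrassP_sq z hz]
  field_simp

/-- The polynomial `Q` of the differential equation `(u')² = Q(u)` for `u = 1 / ℘`, when
`(℘')² = 4 ℘³ - a ℘ - b`. -/
def invWeierstrassPoly {R : Type*} [CommRing R] (a b : R) : R[X] :=
  C 4 * X - C a * X ^ 3 - C b * X ^ 4

lemma derivative_taylorSeries_invWeierstrassP_sq :
    d⁄dX ℂ (taylorSeries (invWeierstrassP L)) ^ 2 =
      aeval (taylorSeries (invWeierstrassP L)) (invWeierstrassPoly L.g₂ L.g₃) := by
  have ha := analyticAt_invWeierstrassP_zero L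
  rw [← taylorSeries_polynomial_eval ha, ← taylorSeries_deriv, sq,
    ← taylorSeries_mul ha.deriv ha.deriv,
    taylorSeries_eq_iff (by fun_prop)
      (by simpa using ha.aeval_polynomial (invWeierstrassPoly L.g₂ L.g₃))]
  simpa [sq, invWeierstrassPoly] using deriv_invWeierstrassP_sq_eventuallyEq L

lemma constantCoeff_taylorSeries_invWeierstrassP :
    (taylorSeries (invWeierstrassP L)).constantCoeff = 0 := by
  simp [← PowerSeries.coeff_zero_eq_constantCoeff_apply]

lemma taylorSeries_invWeierstrassP_ne_zero : taylorSeries (invWeierstrassP L) ≠ 0 := by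
  rw [← map_zero PowerSeries.C, ← taylorSeries_const, Ne,
    taylorSeries_eq_iff (analyticAt_invWeierstrassP_zero L) analyticAt_const]
  intro h
  have := meromorphicOrderAt_eq_top_iff.mpr h
  simp [meromorphicOrderAt_invWeierstrassP_zero] at this

variable {L}

lemma map_taylorSeries_invWeierstrassP (σ : ℂ →+* ℂ) {M : PeriodPair} (h₂ : M.g₂ = σ L.g₂)
    (h₃ : M.g₃ = σ L.g₃) :
    (taylorSeries (invWeierstrassP L)).map σ = taylorSeries (invWeierstrassP M) := by
  have hder (p : ℂ⟦X⟧) : d⁄dX ℂ (p.map σ) = (d⁄dX ℂ p).map σ := by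
    ext n
    simp [PowerSeries.coeff_derivative]
  refine eq_of_derivative_sq_eq_aeval (Q := invWeierstrassPoly M.g₂ M.g₃)
    (by simp [invWeierstrassPoly]) ?_
    (derivative_taylorSeries_invWeierstrassP_sq M) ?_
    (constantCoeff_taylorSeries_invWeierstrassP M) ?_ (taylorSeries_invWeierstrassP_ne_zero M)
  · rw [hder, ← map_pow, derivative_taylorSeries_invWeierstrassP_sq, h₂, h₃]
    simp [invWeierstrassPoly, PowerSeries.algebraMap_eq, map_ofNat σ 4]
  · rw [← PowerSeries.coeff_zero_eq_constantCoeff_apply, PowerSeries.coeff_map,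
      PowerSeries.coeff_zero_eq_constantCoeff_apply, constantCoeff_taylorSeries_invWeierstrassP,
      map_zero]
  · exact (map_ne_zero_iff _ (PowerSeries.map_injective σ σ.injective)).mpr
      (taylorSeries_invWeierstrassP_ne_zero L)

end InvWeierstrassP

/-! ### Even elliptic functions -/

lemma tendsto_add_right_nhdsNE (z l : ℂ) : Tendsto (· + l) (𝓝[≠] z) (𝓝[≠] (z + l)) :=
  ((hasDerivAt_id z).add_const l).tendsto_nhdsNE one_ne_zero

lemma exists_eventuallyEq_const_of_periodic (Λ : Submodule ℤ ℂ) [DiscreteTopology Λ]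
    [IsZLattice ℝ Λ] {f : ℂ → ℂ} (hf : Meromorphic f) (hper : ∀ l ∈ Λ, f.Periodic l)
    (hord : ∀ z, 0 ≤ meromorphicOrderAt f z) : ∃ c, ∀ z, f =ᶠ[𝓝[≠] z] fun _ => c := by
  have hf' : MeromorphicOn f Set.univ := fun z _ => hf z
  set F := toMeromorphicNFOn f Set.univ
  have hFf (z : ℂ) : F =ᶠ[𝓝[≠] z] f := hf'.toMeromorphicNFOn_eq_self_on_nhdsNE (Set.mem_univ z)
  have hF (z : ℂ) : AnalyticAt ℂ F z := by
    rw [← (meromorphicNFOn_toMeromorphicNFOn f _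
      (Set.mem_univ z)).meromorphicOrderAt_nonneg_iff_analyticAt, meromorphicOrderAt_congr (hFf z)]
    exact hord z
  have hFdiff : Differentiable ℂ F := fun z => (hF z).differentiableAt
  have hFper (z l : ℂ) (hl : l ∈ Λ) : F (z + l) = F z := by
    have hshift : (fun w => F (w + l)) =ᶠ[𝓝[≠] z] F := by
      filter_upwards [(tendsto_add_right_nhdsNE z l).eventually (hFf (z + l)), hFf z]
        with w hw hw'
      rw [hw, hw', hper l hl]
    have hcont : Continuous fun w => F (w + l) := hFdiff.continuous.comp (by fun_prop)
    exact ((hcont.continuousAt.eventuallyEq_nhds_iff_eventuallyEq_nhdsNE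
      (hF z).continuousAt).mp hshift).self_of_nhds
  refine ⟨F 0, fun z => (hFf z).symm.trans (.of_forall fun w => ?_)⟩
  exact hFdiff.apply_eq_apply_of_bounded
    (IsZLattice.isCompact_range_of_periodic Λ _ hFdiff.continuous hFper).isBounded w 0

lemma even_of_meromorphicOrderAt_eq {f : ℂ → ℂ} (hf : MeromorphicAt f 0) (heven : f.Even) {n : ℤ}
    (hn : meromorphicOrderAt f 0 = n) : Even n := by
  obtain ⟨g, hg, hg₀, hfg⟩ := (meromorphicOrderAt_eq_int_iff hf).mp hn
  have hneg : Tendsto (fun z : ℂ => -z) (𝓝[≠] 0) (𝓝[≠] 0) := by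
    simpa using (hasDerivAt_neg (0 : ℂ)).tendsto_nhdsNE (by simp)
  have hlim : Tendsto g (𝓝[≠] 0) (𝓝 (g 0)) := hg.continuousAt.tendsto.mono_left nhdsWithin_le_nhds
  have hg_neg : (fun z => (-1) ^ n * g (-z)) =ᶠ[𝓝[≠] 0] g := by
    filter_upwards [hfg, hneg.eventually hfg, self_mem_nhdsWithin] with z hz hz' hz₀
    rw [heven z, hz, sub_zero, sub_zero, smul_eq_mul, smul_eq_mul, ← neg_one_mul z, mul_zpow,
      neg_one_mul z, mul_right_comm, mul_comm, mul_left_inj' (zpow_ne_zero n hz₀)] at hz'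
    exact hz'.symm
  have : (-1) ^ n * g 0 = g 0 :=
    tendsto_nhds_unique ((hlim.comp hneg).const_mul _) (hlim.congr' hg_neg.symm)
  by_contra hodd
  rw [(Int.not_even_iff_odd.mp hodd).neg_one_zpow] at this
  exact hg₀ (by linear_combination -this / 2)

section EvenElliptic

variable {L : PeriodPair} {f : ℂ → ℂ}

lemma meromorphicOrderAt_mul_invWeierstrassP_pow (hf : MeromorphicAt f 0) (n : ℕ) :
    meromorphicOrderAt (fun z => f z * invWeierstrassP L z ^ n) 0 =
      meromorphicOrderAt f 0 + (2 * n : ℤ) := by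
  have hu := (analyticAt_invWeierstrassP_zero L).meromorphicAt
  change meromorphicOrderAt (f * invWeierstrassP L ^ n) 0 = _
  rw [meromorphicOrderAt_mul hf (hu.pow n), meromorphicOrderAt_pow hu,
    meromorphicOrderAt_invWeierstrassP_zero, mul_comm 2 (n : ℤ)]
  rfl

lemma exists_pos_meromorphicOrderAt_sub_weierstrassP_pow (L : PeriodPair) (hf : MeromorphicAt f 0)
    {n : ℕ} (hord : 0 ≤ meromorphicOrderAt f 0 + (2 * n : ℤ)) :
    ∃ c, 0 < meromorphicOrderAt (fun z => f z - c * ℘[L] z ^ n) 0 + (2 * n : ℤ) := by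
  have hP := L.meromorphic_weierstrassP.meromorphicAt (x := 0)
  have hu := (analyticAt_invWeierstrassP_zero L).meromorphicAt
  rw [← meromorphicOrderAt_mul_invWeierstrassP_pow (L := L) hf] at hord
  obtain ⟨c, hc⟩ := tendsto_nhds_of_meromorphicOrderAt_nonneg (by fun_prop) hord
  refine ⟨c, ?_⟩
  rw [← meromorphicOrderAt_mul_invWeierstrassP_pow (L := L) (by fun_prop),
    ← tendsto_zero_iff_meromorphicOrderAt_pos (by fun_prop)]
  have hlim := hc.sub_const c
  rw [sub_self] at hlim
  refine hlim.congr' ?_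
  filter_upwards [eventually_weierstrassP_ne_zero L] with z hz
  rw [invWeierstrassP, inv_pow]
  field_simp

lemma exists_eventuallyEq_polynomial_weierstrassP_of_le (hf : Meromorphic f)
    (hper : ∀ l ∈ L.lattice, f.Periodic l) (heven : f.Even)
    (hord : ∀ z ∉ L.lattice, 0 ≤ meromorphicOrderAt f z) (n : ℕ)
    (hord₀ : 0 ≤ meromorphicOrderAt f 0 + (2 * n : ℤ)) :
    ∃ P : ℂ[X], f =ᶠ[𝓝[≠] 0] fun z => P.eval (℘[L] z) := by
  induction n generalizing f with
  | zero =>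
    obtain ⟨c, hc⟩ := exists_eventuallyEq_const_of_periodic L.lattice hf hper fun z => by
      by_cases hz : z ∈ L.lattice
      · rw [← zero_add z, ← meromorphicOrderAt_fun_comp_add_const_eq_meromorphicOrderAt,
          show (fun w => f (w + z)) = f from funext (hper z hz)]
        simpa using hord₀
      · exact hord z hz
    exact ⟨C c, by simpa using hc 0⟩
  | succ n ih =>
    obtain ⟨c, hc⟩ := exists_pos_meromorphicOrderAt_sub_weierstrassP_pow L (hf 0) hord₀
    have := L.meromorphic_weierstrassP
    have hf₁ : Meromorphic fun z => f z - c * ℘[L] z ^ (n + 1) := by fun_prop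
    have hf₁even : (fun z => f z - c * ℘[L] z ^ (n + 1)).Even := fun z => by simp [heven z]
    obtain ⟨P, hP⟩ := ih hf₁
      (fun l hl z => by simp only [hper l hl z, L.weierstrassP_add_coe z ⟨l, hl⟩]) hf₁even
      (fun z hz => by
        obtain ⟨a, ha⟩ := tendsto_nhds_of_meromorphicOrderAt_nonneg (hf z) (hord z hz)
        have hlim := (L.analyticOnNhd_weierstrassP z hz).continuousAt.tendsto.mono_left
          (nhdsWithin_le_nhds (s := {z}ᶜ))
        exact (tendsto_nhds_iff_meromorphicOrderAt_nonneg (hf₁ z)).mp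
          ⟨_, ha.sub ((hlim.pow (n + 1)).const_mul c)⟩)
      (by
        cases h : meromorphicOrderAt (fun z => f z - c * ℘[L] z ^ (n + 1)) 0 using
          WithTop.recTopCoe with
        | top => simp
        | coe m =>
          obtain ⟨k, rfl⟩ := even_of_meromorphicOrderAt_eq (hf₁ 0) hf₁even h
          rw [h] at hc
          norm_cast at hc ⊢
          omega)
    refine ⟨P + C c * X ^ (n + 1), ?_⟩
    filter_upwards [hP] with z hz
    simp [← hz]

lemma exists_eventuallyEq_polynomial_weierstrassP (hf : Meromorphic f)
    (hper : ∀ l ∈ L.lattice, f.Periodic l) (heven : f.Even)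
    (hord : ∀ z ∉ L.lattice, 0 ≤ meromorphicOrderAt f z) :
    ∃ P : ℂ[X], f =ᶠ[𝓝[≠] 0] fun z => P.eval (℘[L] z) := by
  suffices ∃ n : ℕ, 0 ≤ meromorphicOrderAt f 0 + (2 * n : ℤ) from
    exists_eventuallyEq_polynomial_weierstrassP_of_le hf hper heven hord _ this.choose_spec
  cases h : meromorphicOrderAt f 0 using WithTop.recTopCoe with
  | top => exact ⟨0, by simp⟩
  | coe m =>
    refine ⟨m.natAbs, ?_⟩
    have : 0 ≤ m + 2 * (m.natAbs : ℤ) := by omega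
    exact mod_cast this

end EvenElliptic

/-! ### Inclusions of lattices as algebraic relations -/

lemma natCast_le_analyticOrderAt_polynomial_eval {𝕜 : Type*} [NontriviallyNormedField 𝕜]
    {f : 𝕜 → 𝕜} {z : 𝕜} (hf : AnalyticAt 𝕜 f z) {Q : 𝕜[X]} {n : ℕ}
    (hQ : (X - C (f z)) ^ n ∣ Q) : n ≤ analyticOrderAt (fun w => Q.eval (f w)) z := by
  obtain ⟨R, rfl⟩ := hQ
  have hR : AnalyticAt 𝕜 (fun w => R.eval (f w)) z := by simpa using hf.aeval_polynomial R
  have hsub : AnalyticAt 𝕜 (fun w => f w - f z) z := by fun_prop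
  have hone : 1 ≤ analyticOrderAt (fun w => f w - f z) z :=
    Order.one_le_iff_ne_zero.mpr (hsub.analyticOrderAt_ne_zero.mpr (sub_self _))
  have heq : (fun w => ((X - C (f z)) ^ n * R).eval (f w)) =
      (fun w => f w - f z) ^ n * fun w => R.eval (f w) := by
    ext w
    simp
  rw [heq, analyticOrderAt_mul (hsub.pow n) hR, analyticOrderAt_pow hsub, nsmul_eq_mul]
  exact le_add_right (by simpa using mul_le_mul_right hone (n : ℕ∞))

lemma meromorphic_polynomial_eval {𝕜 : Type*} [NontriviallyNormedField 𝕜] {f : 𝕜 → 𝕜}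
    (hf : Meromorphic f) (P : 𝕜[X]) : Meromorphic fun z => P.eval (f z) := by
  simp only [eval_eq_sum_range]
  fun_prop

section LatticeInclusion

variable {L L' : PeriodPair}

lemma finite_image_weierstrassP (hLL' : L.lattice ≤ L'.lattice) :
    (℘[L] '' L'.lattice).Finite := by
  set Λ := L.lattice.submoduleOf L'.lattice
  have hrank : Module.finrank ℤ Λ = Module.finrank ℤ L'.lattice := by
    rw [(Submodule.submoduleOfEquivOfLe hLL').finrank_eq, L.finrank_lattice, L'.finrank_lattice]
  have : Finite (L'.lattice ⧸ Λ) := Submodule.finiteQuotientOfFreeOfRankEq _ hrank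
  refine (Set.finite_range fun q : L'.lattice ⧸ Λ => ℘[L] (q.out : L'.lattice)).subset ?_
  rintro _ ⟨z, hz, rfl⟩
  have hmem := (Submodule.Quotient.eq Λ).mp (Submodule.Quotient.mk (p := Λ) ⟨z, hz⟩).out_eq
  refine ⟨Submodule.Quotient.mk ⟨z, hz⟩, ?_⟩
  simpa using L.weierstrassP_add_coe z ⟨_, hmem⟩

lemma meromorphicOrderAt_weierstrassP_mul_eval_nonneg {Q : ℂ[X]}
    (hQ : ∀ z ∈ L'.lattice, (X - C (℘[L] z)) ^ 2 ∣ Q) {z : ℂ} (hz : z ∉ L.lattice) :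
    0 ≤ meromorphicOrderAt (fun z => ℘[L'] z * Q.eval (℘[L] z)) z := by
  have hP := L.analyticOnNhd_weierstrassP z hz
  have hQz : AnalyticAt ℂ (fun w => Q.eval (℘[L] w)) z := by
    simpa using hP.aeval_polynomial Q
  by_cases hz' : z ∈ L'.lattice
  · have hord := natCast_le_analyticOrderAt_polynomial_eval hP (hQ z hz')
    change 0 ≤ meromorphicOrderAt (℘[L'] * fun w => Q.eval (℘[L] w)) z
    rw [meromorphicOrderAt_mul (L'.meromorphic_weierstrassP z) hQz.meromorphicAt,
      L'.order_weierstrassP z hz', hQz.meromorphicOrderAt_eq]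
    generalize analyticOrderAt (fun w => Q.eval (℘[L] w)) z = n at hord
    induction n using ENat.recTopCoe with
    | top => simp
    | coe n =>
      simp only [Nat.cast_le] at hord
      rw [ENat.map_natCast, show (-2 : WithTop ℤ) = ((-2 : ℤ) : WithTop ℤ) from rfl]
      norm_cast
      omega
  · exact ((L'.analyticOnNhd_weierstrassP z hz').mul hQz).meromorphicOrderAt_nonneg

lemma exists_weierstrassP_mul_eval_eventuallyEq (hLL' : L.lattice ≤ L'.lattice) :
    ∃ P Q : ℂ[X], Q ≠ 0 ∧
      (fun z => ℘[L'] z * Q.eval (℘[L] z)) =ᶠ[𝓝[≠] 0] fun z => P.eval (℘[L] z) := by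
  set T := (finite_image_weierstrassP hLL').toFinset
  set Q : ℂ[X] := ∏ c ∈ T, (X - C c) ^ 2
  have hQ : Meromorphic fun z => Q.eval (℘[L] z) :=
    meromorphic_polynomial_eval L.meromorphic_weierstrassP Q
  have hdvd (z : ℂ) (hz : z ∈ L'.lattice) : (X - C (℘[L] z)) ^ 2 ∣ Q :=
    Finset.dvd_prod_of_mem (fun c => (X - C c) ^ 2) (by simpa [T] using ⟨z, hz, rfl⟩)
  obtain ⟨P, hPQ⟩ := exists_eventuallyEq_polynomial_weierstrassP (L := L)
    (f := fun z => ℘[L'] z * Q.eval (℘[L] z)) (L'.meromorphic_weierstrassP.mul hQ)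
    (fun l hl z => by
      simp only [L.weierstrassP_add_coe z ⟨l, hl⟩, L'.weierstrassP_add_coe z ⟨l, hLL' hl⟩])
    (fun z => by simp) fun _ => meromorphicOrderAt_weierstrassP_mul_eval_nonneg hdvd
  exact ⟨P, Q, Finset.prod_ne_zero_iff.mpr fun c _ => pow_ne_zero _ (X_sub_C_ne_zero c), hPQ⟩

lemma eventually_weierstrassP_ne (L : PeriodPair) (c : ℂ) : ∀ᶠ z in 𝓝[≠] (0 : ℂ), ℘[L] z ≠ c := by
  have hu : Tendsto (fun z => c * invWeierstrassP L z) (𝓝[≠] 0) (𝓝 0) := by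
    simpa using ((analyticAt_invWeierstrassP_zero L).continuousAt.tendsto.mono_left
      nhdsWithin_le_nhds).const_mul c
  filter_upwards [hu.eventually_ne one_ne_zero.symm, eventually_weierstrassP_ne_zero L]
    with z hz hz₀ hc
  exact hz (by rw [invWeierstrassP, hc, mul_inv_cancel₀ (hc ▸ hz₀)])

lemma eventually_eval_weierstrassP_ne_zero (L : PeriodPair) {Q : ℂ[X]} (hQ : Q ≠ 0) :
    ∀ᶠ z in 𝓝[≠] (0 : ℂ), Q.eval (℘[L] z) ≠ 0 := by
  filter_upwards [(Filter.eventually_all_finset Q.roots.toFinset).mpr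
    fun c _ => eventually_weierstrassP_ne L c] with z hz hz₀
  exact hz _ (by simpa [hQ] using hz₀) rfl

lemma eventuallyEq_of_meromorphic {f g : ℂ → ℂ} (hf : Meromorphic f) (hg : Meromorphic g) {x : ℂ}
    (h : f =ᶠ[𝓝[≠] x] g) (y : ℂ) : f =ᶠ[𝓝[≠] y] g := by
  have htop (w : ℂ) : meromorphicOrderAt (f - g) w = ⊤ ↔ f =ᶠ[𝓝[≠] w] g := by
    simp [meromorphicOrderAt_eq_top_iff, sub_eq_zero, EventuallyEq]
  by_contra hy
  rw [← htop] at h hy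
  exact (hf.sub hg).exists_meromorphicOrderAt_ne_top_iff_forall.mp ⟨y, hy⟩ x h

lemma lattice_le_of_weierstrassP_mul_eval_eventuallyEq {P Q : ℂ[X]} (hQ : Q ≠ 0)
    (h : (fun z => ℘[L'] z * Q.eval (℘[L] z)) =ᶠ[𝓝[≠] 0] fun z => P.eval (℘[L] z)) :
    L.lattice ≤ L'.lattice := by
  intro l hl
  have hP := L.meromorphic_weierstrassP
  have h' := eventuallyEq_of_meromorphic (L'.meromorphic_weierstrassP.mul
    (meromorphic_polynomial_eval hP Q)) (meromorphic_polynomial_eval hP P) h (0 + l)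
  have hshift : (fun z => ℘[L'] (z + l)) =ᶠ[𝓝[≠] 0] ℘[L'] := by
    filter_upwards [h, (tendsto_add_right_nhdsNE 0 l).eventually h',
      eventually_eval_weierstrassP_ne_zero L hQ] with z hz hzl hz₀
    simp only [Pi.mul_apply, L.weierstrassP_add_coe z ⟨l, hl⟩] at hzl
    exact mul_right_cancel₀ hz₀ (hzl.trans hz.symm)
  by_contra hl'
  have hord := meromorphicOrderAt_congr hshift
  rw [meromorphicOrderAt_fun_comp_add_const_eq_meromorphicOrderAt, zero_add,
    L'.order_weierstrassP 0 L'.lattice.zero_mem] at hord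
  have := (L'.analyticOnNhd_weierstrassP l hl').meromorphicOrderAt_nonneg
  rw [hord] at this
  exact absurd this (by decide)

lemma eval_inv_reflect_mul_pow {K : Type*} [Field K] (P : K[X]) {N : ℕ} (hP : P.natDegree ≤ N)
    {x : K} (hx : x ≠ 0) : (P.reflect N).eval x⁻¹ * x ^ N = P.eval x := by
  let := invertibleOfNonzero hx
  exact eval₂_reflect_mul_pow (.id K) x N P hP

lemma weierstrassP_mul_eval_eventuallyEq_iff {P Q : ℂ[X]} {N : ℕ} (hP : P.natDegree ≤ N)
    (hQ : Q.natDegree ≤ N) :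
    ((fun z => ℘[L'] z * Q.eval (℘[L] z)) =ᶠ[𝓝[≠] 0] fun z => P.eval (℘[L] z)) ↔
      aeval (taylorSeries (invWeierstrassP L)) (Q.reflect N) =
        taylorSeries (invWeierstrassP L') *
          aeval (taylorSeries (invWeierstrassP L)) (P.reflect N) := by
  have hL := analyticAt_invWeierstrassP_zero L
  have hL' := analyticAt_invWeierstrassP_zero L'
  have heval (R : ℂ[X]) : AnalyticAt ℂ (fun z => R.eval (invWeierstrassP L z)) 0 := by
    simpa using hL.aeval_polynomial R
  have hmul : AnalyticAt ℂ (fun z => invWeierstrassP L' z *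
      (P.reflect N).eval (invWeierstrassP L z)) 0 := hL'.mul (heval _)
  rw [← taylorSeries_polynomial_eval hL, ← taylorSeries_polynomial_eval hL,
    ← taylorSeries_mul hL' (heval _), taylorSeries_eq_iff (heval _) hmul]
  refine eventually_congr ?_
  filter_upwards [eventually_weierstrassP_ne_zero L, eventually_weierstrassP_ne_zero L']
    with z hz hz'
  rw [← eval_inv_reflect_mul_pow P hP hz, ← eval_inv_reflect_mul_pow Q hQ hz, ← mul_assoc,
    mul_left_inj' (pow_ne_zero N hz), invWeierstrassP, invWeierstrassP, eq_inv_mul_iff_mul_eq₀ hz']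

theorem lattice_le_of_ringHom (σ : ℂ →+* ℂ) {M M' : PeriodPair}
    (h₂ : M.g₂ = σ L.g₂) (h₃ : M.g₃ = σ L.g₃) (h₂' : M'.g₂ = σ L'.g₂) (h₃' : M'.g₃ = σ L'.g₃)
    (hLL' : L.lattice ≤ L'.lattice) : M.lattice ≤ M'.lattice := by
  obtain ⟨P, Q, hQ, hPQ⟩ := exists_weierstrassP_mul_eval_eventuallyEq hLL'
  have hrel := congrArg (PowerSeries.map σ) <| (weierstrassP_mul_eval_eventuallyEq_iff
    (le_max_left P.natDegree Q.natDegree) (le_max_right P.natDegree Q.natDegree)).mp hPQ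
  have hmap (t : ℂ⟦X⟧) (R : ℂ[X]) :
      (aeval t R).map σ = aeval (t.map σ) (R.map σ) :=
    map_aeval_eq_aeval_map (by ext; simp [PowerSeries.algebraMap_eq]) R t
  rw [map_mul, hmap, hmap, ← reflect_map, ← reflect_map, map_taylorSeries_invWeierstrassP σ h₂ h₃,
    map_taylorSeries_invWeierstrassP σ h₂' h₃'] at hrel
  exact lattice_le_of_weierstrassP_mul_eval_eventuallyEq
    ((Polynomial.map_ne_zero_iff σ.injective).mpr hQ)
    ((weierstrassP_mul_eval_eventuallyEq_iff (natDegree_map_le.trans (le_max_left _ _))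
      (natDegree_map_le.trans (le_max_right _ _))).mpr hrel)

theorem lattice_eq_of_g₂_eq_of_g₃_eq {L M : PeriodPair} (h₂ : L.g₂ = M.g₂) (h₃ : L.g₃ = M.g₃) :
    L.lattice = M.lattice :=
  le_antisymm (lattice_le_of_ringHom (.id ℂ) h₂ h₃ rfl rfl le_rfl)
    (lattice_le_of_ringHom (.id ℂ) (L := M) (L' := M) rfl rfl h₂ h₃ le_rfl)

end LatticeInclusion

/-! ### Homotheties and the `j`-invariant -/

lemma G_eq_tsum_prod (L : PeriodPair) (n : ℕ) :
    L.G n = ∑' p : ℤ × ℤ, (((p.1 : ℂ) * L.ω₁ + (p.2 : ℂ) * L.ω₂) ^ n)⁻¹ := by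
  rw [PeriodPair.G, ← L.latticeEquivProd.symm.toEquiv.tsum_eq]
  refine tsum_congr fun p => ?_
  rw [← L.latticeEquiv_symm_apply]
  rfl

lemma G_congr {L M : PeriodPair} (h : L.lattice = M.lattice) (n : ℕ) : L.G n = M.G n := by
  unfold PeriodPair.G
  rw [h]

lemma g₂_congr {L M : PeriodPair} (h : L.lattice = M.lattice) : L.g₂ = M.g₂ := by
  rw [PeriodPair.g₂, PeriodPair.g₂, G_congr h]

lemma g₃_congr {L M : PeriodPair} (h : L.lattice = M.lattice) : L.g₃ = M.g₃ := by
  rw [PeriodPair.g₃, PeriodPair.g₃, G_congr h]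

/-- The image of a pair of periods under the homothety `z ↦ α * z`. -/
def scale (α : ℂ) (hα : α ≠ 0) (L : PeriodPair) : PeriodPair where
  ω₁ := α * L.ω₁
  ω₂ := α * L.ω₂
  indep := by
    have h := L.indep
    rw [LinearIndependent.pair_iff] at h ⊢
    intro s t hst
    refine h s t (mul_left_cancel₀ hα ?_)
    simp only [Complex.real_smul] at hst ⊢
    linear_combination hst

lemma lattice_scale (α : ℂ) (hα : α ≠ 0) (L : PeriodPair) :
    (scale α hα L).lattice = Submodule.span ℤ {α} * L.lattice := by
  simp [PeriodPair.lattice, scale, Submodule.span_mul_span, Set.image_pair]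

lemma G_scale (α : ℂ) (hα : α ≠ 0) (L : PeriodPair) (n : ℕ) :
    (scale α hα L).G n = (α⁻¹) ^ n * L.G n := by
  rw [G_eq_tsum_prod, G_eq_tsum_prod, ← tsum_mul_left]
  refine tsum_congr fun p => ?_
  rw [scale, inv_pow, ← mul_inv, ← mul_pow]
  ring_nf

lemma g₂_scale (α : ℂ) (hα : α ≠ 0) (L : PeriodPair) :
    (scale α hα L).g₂ = (α⁻¹) ^ 4 * L.g₂ := by
  rw [PeriodPair.g₂, PeriodPair.g₂, G_scale]
  ring

lemma g₃_scale (α : ℂ) (hα : α ≠ 0) (L : PeriodPair) :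
    (scale α hα L).g₃ = (α⁻¹) ^ 6 * L.g₃ := by
  rw [PeriodPair.g₃, PeriodPair.g₃, G_scale]
  ring

/-- The `j`-invariant of the lattice spanned by a pair of periods. -/
def jInvariant (L : PeriodPair) : ℂ := 1728 * L.g₂ ^ 3 / (L.g₂ ^ 3 - 27 * L.g₃ ^ 2)

lemma jInvariant_congr {L M : PeriodPair} (h : L.lattice = M.lattice) :
    jInvariant L = jInvariant M := by
  rw [jInvariant, jInvariant, g₂_congr h, g₃_congr h]

lemma jInvariant_scale (α : ℂ) (hα : α ≠ 0) (L : PeriodPair) :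
    jInvariant (scale α hα L) = jInvariant L := by
  rw [jInvariant, jInvariant, g₂_scale, g₃_scale]
  have h : (α⁻¹) ^ 12 ≠ 0 := pow_ne_zero _ (inv_ne_zero hα)
  rw [← mul_div_mul_left (1728 * L.g₂ ^ 3) _ h]
  ring_nf

/-- The pair of periods `(τ, 1)`, spanning the lattice whose `j`-invariant is `j(τ)`. -/
def ofUpperHalfPlane (τ : ℍ) : PeriodPair where
  ω₁ := τ
  ω₂ := 1
  indep := by
    rw [LinearIndependent.pair_iff]
    intro s t hst
    have him := congrArg Complex.im hst
    have hs : s = 0 := by simpa [τ.im_pos.ne', UpperHalfPlane.im_ne_zero] using him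
    subst hs
    simpa using hst

lemma jFunction_eq_jInvariant (τ : ℍ) : JPaper.jFunction τ = jInvariant (ofUpperHalfPlane τ) := by
  have h : ∀ n : ℕ, n ≠ 0 → (∑' p : ℤ × ℤ, if p = 0 then 0 else
      (((p.1 : ℂ) * (τ : ℂ) + (p.2 : ℂ)) ^ n)⁻¹) = (ofUpperHalfPlane τ).G n := by
    intro n hn
    rw [G_eq_tsum_prod]
    refine tsum_congr fun p => ?_
    split_ifs with hp
    · simp [hp, hn]
    · simp [ofUpperHalfPlane]
  simp only [JPaper.jFunction, h 4 (by norm_num), h 6 (by norm_num)]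
  rfl

/-! ### Uniformization -/

section Uniformization

open ModularForm EisensteinSeries

lemma G_ofUpperHalfPlane (τ : ℍ) {k : ℕ} (hk : 3 ≤ k) :
    (ofUpperHalfPlane τ).G k = 2 * riemannZeta k * E hk τ := by
  have h := tsum_eisSummand_eq_riemannZeta_mul_eisensteinSeries hk τ
  have hE : E hk τ = (1 / 2 : ℂ) • eisensteinSeriesSIF (N := 1) 0 k τ := rfl
  rw [hE, eisensteinSeriesSIF_apply, G_eq_tsum_prod, ← (finTwoArrowEquiv ℤ).tsum_eq]
  have h' : ∑' v : Fin 2 → ℤ, eisSummand k v τ = ∑' c : Fin 2 → ℤ,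
      ((((finTwoArrowEquiv ℤ c).1 : ℂ) * (ofUpperHalfPlane τ).ω₁ +
        ((finTwoArrowEquiv ℤ c).2 : ℂ) * (ofUpperHalfPlane τ).ω₂) ^ k)⁻¹ := by
    refine tsum_congr fun v => ?_
    simp [eisSummand, ofUpperHalfPlane]
  rw [← h', h, smul_eq_mul]
  ring

lemma riemannZeta_six : riemannZeta 6 = Real.pi ^ 6 / 945 := by
  have h := riemannZeta_two_mul_nat (k := 3) (by norm_num)
  have hB : _root_.bernoulli 6 = 1 / 42 := by
    rw [bernoulli_eq_bernoulli'_of_ne_one (by norm_num)]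
    have h5 : bernoulli' 5 = 0 := bernoulli'_eq_zero_of_odd ⟨2, rfl⟩ (by norm_num)
    have hc : Nat.choose 6 2 = 15 ∧ Nat.choose 6 4 = 15 := by decide
    rw [bernoulli'_def]
    norm_num [Finset.sum_range_succ, h5, hc]
  norm_num [hB, Nat.factorial] at h
  rw [h]
  ring

lemma g₂_ofUpperHalfPlane (τ : ℍ) :
    (ofUpperHalfPlane τ).g₂ = 4 * Real.pi ^ 4 / 3 * E₄ τ := by
  have := riemannZeta_four
  rw [PeriodPair.g₂, G_ofUpperHalfPlane τ (by norm_num : 3 ≤ 4)]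
  push_cast
  rw [this]
  ring

lemma g₃_ofUpperHalfPlane (τ : ℍ) :
    (ofUpperHalfPlane τ).g₃ = 8 * Real.pi ^ 6 / 27 * E₆ τ := by
  have := riemannZeta_six
  rw [PeriodPair.g₃, G_ofUpperHalfPlane τ (by norm_num : 3 ≤ 6)]
  push_cast
  rw [this]
  ring

lemma exists_eq_scale_ofUpperHalfPlane (L : PeriodPair) :
    ∃ (α : ℂ) (hα : α ≠ 0) (τ : ℍ), L.lattice = (scale α hα (ofUpperHalfPlane τ)).lattice := by
  have hind := LinearIndependent.pair_iff.mp L.indep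
  have h₁ : L.ω₁ ≠ 0 := fun h => by simpa using hind 1 0 (by simp [h])
  have h₂ : L.ω₂ ≠ 0 := fun h => by simpa using hind 0 1 (by simp [h])
  have him : (L.ω₁ / L.ω₂).im ≠ 0 := by
    intro him
    have hre : L.ω₁ / L.ω₂ = ((L.ω₁ / L.ω₂).re : ℂ) := Complex.ext rfl (by simpa using him)
    have := (hind 1 (-(L.ω₁ / L.ω₂).re) (by
      simp only [Complex.real_smul, Complex.ofReal_neg, ← hre]
      field_simp
      simp)).1
    exact one_ne_zero this
  rcases him.lt_or_gt with him | him
  · refine ⟨L.ω₂, h₂, ⟨-(L.ω₁ / L.ω₂), by simpa using him⟩, ?_⟩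
    have h : L.ω₂ * -(L.ω₁ / L.ω₂) = -L.ω₁ := by field_simp
    simp only [PeriodPair.lattice, scale, ofUpperHalfPlane, h, mul_one]
    rw [Submodule.span_insert, Submodule.span_insert, ← Set.neg_singleton, Submodule.span_neg]
  · refine ⟨L.ω₂, h₂, ⟨L.ω₁ / L.ω₂, him⟩, ?_⟩
    have h : L.ω₂ * (L.ω₁ / L.ω₂) = L.ω₁ := by field_simp
    simp only [PeriodPair.lattice, scale, ofUpperHalfPlane, h, mul_one]

lemma g₂_pow_sub_g₃_pow_ofUpperHalfPlane_ne_zero (τ : ℍ) :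
    (ofUpperHalfPlane τ).g₂ ^ 3 - 27 * (ofUpperHalfPlane τ).g₃ ^ 2 ≠ 0 := by
  have h := discriminant_eq_E₄_cube_sub_E₆_sq τ
  have hΔ := discriminant_ne_zero τ
  have hpi : (Real.pi : ℂ) ≠ 0 := by exact_mod_cast Real.pi_ne_zero
  have : (ofUpperHalfPlane τ).g₂ ^ 3 - 27 * (ofUpperHalfPlane τ).g₃ ^ 2 =
      64 * Real.pi ^ 12 / 27 * 1728 * ModularForm.discriminant τ := by
    rw [g₂_ofUpperHalfPlane, g₃_ofUpperHalfPlane, h]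
    ring
  rw [this]
  exact mul_ne_zero (by simp [hpi]) hΔ

lemma g₂_pow_sub_g₃_pow_ne_zero (L : PeriodPair) : L.g₂ ^ 3 - 27 * L.g₃ ^ 2 ≠ 0 := by
  obtain ⟨α, hα, τ, h⟩ := exists_eq_scale_ofUpperHalfPlane L
  rw [g₂_congr h, g₃_congr h, g₂_scale, g₃_scale]
  convert mul_ne_zero (pow_ne_zero 12 (inv_ne_zero hα))
    (g₂_pow_sub_g₃_pow_ofUpperHalfPlane_ne_zero τ) using 1
  ring

lemma tendsto_atImInfty_qExpansion_coeff_zero {k : ℤ} (f : ModularForm 𝒮ℒ k) :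
    Tendsto f atImInfty (𝓝 ((qExpansion 1 f).coeff 0)) := by
  have hanal := ModularFormClass.analyticAt_cuspFunction_zero f one_pos one_mem_strictPeriods_SL
  have hper := SlashInvariantFormClass.periodic_comp_ofComplex f one_mem_strictPeriods_SL
  rw [qExpansion_coeff_zero one_pos hanal hper, ← cuspFunction_apply_zero one_pos hanal hper]
  exact (hanal.continuousAt.tendsto.comp (qParam_tendsto_atImInfty one_pos)).congr
    (fun τ => SlashInvariantFormClass.eq_cuspFunction f τ one_mem_strictPeriods_SL one_ne_zero)

lemma exists_eq_zero_of_tendsto_atImInfty {k : ℤ} (hk : 0 < k) (f : ModularForm 𝒮ℒ k) {c : ℂ}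
    (hc : c ≠ 0) (hf : Tendsto f atImInfty (𝓝 c)) : ∃ z, f z = 0 := by
  by_contra! hz
  have hslash : ∀ γ : SL(2, ℤ), (fun z => 1 / f z) ∣[-k] γ = fun z => 1 / f z := by
    intro γ
    have hγ : (γ : GL (Fin 2) ℝ) ∈ 𝒮ℒ := ⟨γ, rfl⟩
    change ((1 : ModularForm 𝒮ℒ 0) / ⇑f : ℍ → ℂ) ∣[-k] γ = (1 : ModularForm 𝒮ℒ 0) / ⇑f
    rw [show (-k : ℤ) = 0 - k by ring]
    simp_rw [div_slash_SL2, SL_slash, SlashInvariantForm.slash_action_eqn _ _ hγ]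
  let g : ModularForm 𝒮ℒ (-k) :=
    { toFun z := 1 / f z
      slash_action_eq' := fun _ ⟨γ, hγ⟩ => hγ ▸ hslash γ
      holo' := (1 : ModularForm 𝒮ℒ 0).holo'.div f.holo' hz
      bdd_at_cusps' {c} hc := by
        rw [Subgroup.IsArithmetic.isCusp_iff_isCusp_SL2Z] at hc
        rw [OnePoint.isBoundedAt_iff_forall_SL2Z hc]
        intro γ _
        rw [hslash γ, IsBoundedAtImInfty, BoundedAtFilter]
        simp only [one_div]
        exact (hf.inv₀ (by assumption)).isBigO_one ℝ }
  have hg := ModularFormClass.levelOne_neg_weight_eq_zero (neg_lt_zero.mpr hk) g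
  have := congrFun hg I
  have h1 : 1 / f I = 0 := this
  simp [hz] at h1

lemma exists_mul_E₄_pow_eq_mul_E₆_pow {x y : ℂ} (hxy : x ≠ y) :
    ∃ τ : ℍ, x * E₄ τ ^ 3 = y * E₆ τ ^ 2 := by
  let f : ModularForm 𝒮ℒ 12 := x • ModularForm.mcast (by decide) (E₄.pow 3) -
    y • ModularForm.mcast (by decide) (E₆.pow 2)
  have hf (z : ℍ) : f z = x * E₄ z ^ 3 - y * E₆ z ^ 2 := by
    have h₄ : (E₄.pow 3) z = E₄ z ^ 3 := congrFun (ModularForm.coe_pow E₄ 3) z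
    have h₆ : (E₆.pow 2) z = E₆ z ^ 2 := congrFun (ModularForm.coe_pow E₆ 2) z
    simp [← h₄, ← h₆, f, ModularForm.coe_mcast]
  have h₄ : Tendsto E₄ atImInfty (𝓝 1) :=
    E_qExpansion_coeff_zero (k := 4) _ ⟨2, rfl⟩ ▸ tendsto_atImInfty_qExpansion_coeff_zero E₄
  have h₆ : Tendsto E₆ atImInfty (𝓝 1) :=
    E_qExpansion_coeff_zero (k := 6) _ ⟨3, rfl⟩ ▸ tendsto_atImInfty_qExpansion_coeff_zero E₆
  have hlim : Tendsto f atImInfty (𝓝 (x - y)) := by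
    simpa [funext hf] using ((h₄.pow 3).const_mul x).sub ((h₆.pow 2).const_mul y)
  obtain ⟨τ, hτ⟩ := exists_eq_zero_of_tendsto_atImInfty (by norm_num) f (sub_ne_zero.mpr hxy) hlim
  exact ⟨τ, sub_eq_zero.mp (hf τ ▸ hτ)⟩

lemma exists_mul_g₂_pow_eq_mul_g₃_pow {a b : ℂ} (hab : a ^ 3 - 27 * b ^ 2 ≠ 0) :
    ∃ τ : ℍ, b ^ 2 * (ofUpperHalfPlane τ).g₂ ^ 3 = a ^ 3 * (ofUpperHalfPlane τ).g₃ ^ 2 := by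
  have hne : 27 * b ^ 2 ≠ a ^ 3 := fun h => hab (by rw [h, sub_self])
  obtain ⟨τ, hτ⟩ := exists_mul_E₄_pow_eq_mul_E₆_pow hne
  refine ⟨τ, ?_⟩
  rw [g₂_ofUpperHalfPlane, g₃_ofUpperHalfPlane]
  linear_combination (64 * Real.pi ^ 12 / 729 : ℂ) * hτ

lemma exists_pow_four_mul_eq_and_pow_six_mul_eq {k : Type*} [Field k] [IsAlgClosed k]
    {a b x y : k} (h : b ^ 2 * x ^ 3 = a ^ 3 * y ^ 2) (hab : a ≠ 0 ∨ b ≠ 0)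
    (hxy : x ≠ 0 ∨ y ≠ 0) : ∃ μ : k, μ ≠ 0 ∧ μ ^ 4 * x = a ∧ μ ^ 6 * y = b := by
  have exists_root {n : ℕ} (hn : n ≠ 0) {c d : k} (hc : c ≠ 0) (hd : d ≠ 0) :
      ∃ μ : k, μ ≠ 0 ∧ μ ^ n = c / d := by
    obtain ⟨μ, hμ⟩ := IsAlgClosed.exists_pow_nat_eq (c / d) (Nat.pos_of_ne_zero hn)
    exact ⟨μ, fun h0 => div_ne_zero hc hd (by rw [← hμ, h0, zero_pow hn]), hμ⟩
  have hx : x = 0 ↔ a = 0 := by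
    constructor <;> rintro rfl <;> simp_all
  have hy : y = 0 ↔ b = 0 := by
    constructor <;> rintro rfl <;> simp_all
  rcases eq_or_ne a 0 with rfl | ha
  · obtain ⟨μ, hμ0, hμ⟩ := exists_root (n := 6) (by norm_num) (hab.resolve_left (· rfl))
      (mt hy.mp (hab.resolve_left (· rfl)))
    exact ⟨μ, hμ0, by simp [hx.mpr rfl], by rw [hμ, div_mul_cancel₀ _ (by simp_all)]⟩
  rcases eq_or_ne b 0 with rfl | hb
  · obtain ⟨μ, hμ0, hμ⟩ := exists_root (n := 4) (by norm_num) ha (mt hx.mp ha)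
    exact ⟨μ, hμ0, by rw [hμ, div_mul_cancel₀ _ (mt hx.mp ha)], by simp [hy.mpr rfl]⟩
  have hx0 := mt hx.mp ha
  have hy0 := mt hy.mp hb
  obtain ⟨μ, hμ0, hμ⟩ := exists_root (n := 2) (by norm_num) (mul_ne_zero hb hx0)
    (mul_ne_zero ha hy0)
  refine ⟨μ, hμ0, ?_, ?_⟩
  · rw [show μ ^ 4 = (μ ^ 2) ^ 2 by ring, hμ]
    field_simp
    linear_combination h
  · rw [show μ ^ 6 = (μ ^ 2) ^ 3 by ring, hμ]
    field_simp
    linear_combination h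

theorem exists_g₂_eq_and_g₃_eq {a b : ℂ} (hab : a ^ 3 - 27 * b ^ 2 ≠ 0) :
    ∃ L : PeriodPair, L.g₂ = a ∧ L.g₃ = b := by
  have ne_zero_or {x y : ℂ} (h : x ^ 3 - 27 * y ^ 2 ≠ 0) : x ≠ 0 ∨ y ≠ 0 := by
    contrapose! h
    simp [h]
  obtain ⟨τ, hτ⟩ := exists_mul_g₂_pow_eq_mul_g₃_pow hab
  obtain ⟨μ, hμ, h₂, h₃⟩ := exists_pow_four_mul_eq_and_pow_six_mul_eq hτ (ne_zero_or hab)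
    (ne_zero_or (g₂_pow_sub_g₃_pow_ofUpperHalfPlane_ne_zero τ))
  exact ⟨scale μ⁻¹ (inv_ne_zero hμ) (ofUpperHalfPlane τ), by rw [g₂_scale, inv_inv, h₂],
    by rw [g₃_scale, inv_inv, h₃]⟩

end Uniformization

/-! ### Quadratic modules and their inverses -/

section QuadraticModules

lemma div_eq_mul_of_mul_eq {R A : Type*} [CommSemiring R] [CommSemiring A] [Algebra R A]
    {L M N : Submodule R A} (hMN : 1 ≤ M * N) (hL : M * N * L = L) : L / M = L * N := by
  refine le_antisymm ?_ ?_
  · calc L / M ≤ L / M * (M * N) := le_mul_of_one_le_right' hMN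
      _ = L / M * M * N := (mul_assoc ..).symm
      _ ≤ L * N := mul_le_mul_left (Submodule.le_div_iff_mul_le.mp le_rfl) N
  · rw [Submodule.le_div_iff_mul_le, mul_assoc, mul_comm N, mul_comm, hL]

lemma div_eq_self_of_mul_eq {R A : Type*} [CommSemiring R] [CommSemiring A] [Algebra R A]
    {L O : Submodule R A} (hO : 1 ≤ O) (hL : O * L = L) : L / O = L := by
  refine le_antisymm (fun x hx => ?_) (Submodule.le_div_iff_mul_le.mpr (mul_comm O L ▸ hL.le))
  simpa using Submodule.mem_div_iff_forall_mul_mem.mp hx 1 (Submodule.one_le.mp hO)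

variable {A : Type*} [CommRing A]

/-- The additive group `ℤ s + ℤ`; for quadratic `s`, a proper ideal of some quadratic order, and
the order itself if `s` is integral. -/
def pairModule (s : A) : Submodule ℤ A := Submodule.span ℤ {s, 1}

lemma mem_pairModule {s x : A} : x ∈ pairModule s ↔ ∃ m n : ℤ, m * s + n = x := by
  simp [pairModule, Submodule.mem_span_pair]

lemma self_mem_pairModule (s : A) : s ∈ pairModule s := Submodule.subset_span (by simp)

lemma one_mem_pairModule (s : A) : (1 : A) ∈ pairModule s := Submodule.subset_span (by simp)

lemma one_le_pairModule (s : A) : 1 ≤ pairModule s := Submodule.one_le.mpr (one_mem_pairModule s)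

/-- An element satisfying a quadratic equation over `ℤ`, possibly reducible. -/
def IsQuadratic (z : A) : Prop := ∃ a b c : ℤ, a ≠ 0 ∧ a * z ^ 2 + b * z + c = 0

lemma isQuadratic_of_mem_pairModule_div {s t : A} (ht : t ∉ Set.range ((↑) : ℤ → A))
    (h : t ∈ pairModule s / pairModule s) :
    IsQuadratic s ∧ ∃ r u : ℤ, r ≠ 0 ∧ t = r * s + u := by
  rw [Submodule.mem_div_iff_forall_mul_mem] at h
  obtain ⟨r, u, hru⟩ := mem_pairModule.mp (h 1 (one_mem_pairModule s))
  obtain ⟨p, q, hpq⟩ := mem_pairModule.mp (h s (self_mem_pairModule s))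
  have hr : r ≠ 0 := by
    rintro rfl
    exact ht ⟨u, by simpa using hru⟩
  refine ⟨⟨r, u - p, -q, hr, ?_⟩, r, u, hr, by rw [hru, mul_one]⟩
  push_cast
  linear_combination s * hru - hpq

lemma IsQuadratic.exists_primitive [IsDomain A] [CharZero A] {z : A} (hz : IsQuadratic z) :
    ∃ a b c : ℤ, 0 < a ∧ a * z ^ 2 + b * z + c = 0 ∧ ∃ u v w : ℤ, u * a + v * b + w * c = 1 := by
  obtain ⟨a, b, c, ha, h⟩ := hz
  obtain ⟨d, hd⟩ : ∃ d, Submodule.span ℤ {a, b, c} = Submodule.span ℤ {d} :=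
    (IsPrincipalIdealRing.principal (Ideal.span {a, b, c})).principal
  have dvd {x : ℤ} (hx : x ∈ ({a, b, c} : Set ℤ)) : d ∣ x :=
    Ideal.mem_span_singleton.mp (hd ▸ Submodule.subset_span hx :)
  obtain ⟨u, v, w, huvw⟩ : ∃ u v w : ℤ, u * a + v * b + w * c = d :=
    Submodule.mem_span_triple.mp (hd ▸ Submodule.mem_span_singleton_self d)
  obtain ⟨a, rfl⟩ := dvd (x := a) (by simp)
  obtain ⟨b, rfl⟩ := dvd (x := b) (by simp)
  obtain ⟨c, rfl⟩ := dvd (x := c) (by simp)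
  obtain ⟨hd0, ha0⟩ := mul_ne_zero_iff.mp ha
  have hroot : a * z ^ 2 + b * z + c = 0 := by
    refine mul_left_cancel₀ (Int.cast_ne_zero.mpr hd0 : (d : A) ≠ 0) ?_
    push_cast at h
    linear_combination h
  have hbezout : u * a + v * b + w * c = 1 :=
    mul_left_cancel₀ hd0 (by linear_combination huvw)
  rcases ha0.lt_or_gt with hneg | hpos
  · refine ⟨-a, -b, -c, neg_pos.mpr hneg, ?_, -u, -v, -w, by linear_combination hbezout⟩
    push_cast
    linear_combination -hroot
  · exact ⟨a, b, c, hpos, hroot, u, v, w, hbezout⟩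

variable {s : A} {a b c : ℤ}

lemma pairModule_mul_span_pair (h : a * s ^ 2 + b * s + c = 0)
    (hu : ∃ u v w : ℤ, u * a + v * b + w * c = 1) :
    pairModule s * Submodule.span ℤ {(a : A), b + a * s} = pairModule (a * s) := by
  obtain ⟨u, v, w, hu⟩ := hu
  have hu' : (u : A) * a + v * b + w * c = 1 := by exact_mod_cast congrArg (Int.cast : ℤ → A) hu
  refine le_antisymm ?_ ?_
  · rw [pairModule, Submodule.span_mul_span, Submodule.span_le]
    rintro _ ⟨x, rfl | rfl, y, rfl | rfl, rfl⟩ <;> refine mem_pairModule.mpr ?_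
    · exact ⟨1, 0, by push_cast; ring⟩
    · exact ⟨0, -c, by push_cast; linear_combination -h⟩
    · exact ⟨0, a, by push_cast; ring⟩
    · exact ⟨1, b, by push_cast; ring⟩
  · have ha : (a : A) ∈ Submodule.span ℤ {(a : A), b + a * s} := Submodule.subset_span (by simp)
    have hb : (b + a * s : A) ∈ Submodule.span ℤ {(a : A), b + a * s} :=
      Submodule.subset_span (by simp)
    have hsa := Submodule.mul_mem_mul (self_mem_pairModule s) ha
    have hsb := Submodule.mul_mem_mul (self_mem_pairModule s) hb
    have h1a := Submodule.mul_mem_mul (one_mem_pairModule s) ha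
    have h1b := Submodule.mul_mem_mul (one_mem_pairModule s) hb
    rw [pairModule, Submodule.span_le]
    rintro x (rfl | rfl)
    · rwa [mul_comm s] at hsa
    · rw [SetLike.mem_coe]
      convert add_mem (add_mem (add_mem (Submodule.smul_mem _ u h1a) (Submodule.smul_mem _ v h1b))
        (Submodule.smul_mem _ (-v) hsa)) (Submodule.smul_mem _ (-w) hsb) using 1
      simp only [zsmul_eq_mul, Int.cast_neg]
      linear_combination -hu' + w * h

lemma pairModule_mul_pairModule (h : a * s ^ 2 + b * s + c = 0) :
    pairModule (a * s) * pairModule s = pairModule s := by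
  refine le_antisymm ?_ (le_mul_of_one_le_left' (one_le_pairModule _))
  conv_lhs => rw [pairModule, pairModule, Submodule.span_mul_span]
  rw [Submodule.span_le]
  rintro _ ⟨x, rfl | rfl, y, rfl | rfl, rfl⟩ <;> refine mem_pairModule.mpr ?_
  · exact ⟨-b, -c, by push_cast; linear_combination -h⟩
  · exact ⟨a, 0, by push_cast; ring⟩
  · exact ⟨1, 0, by push_cast; ring⟩
  · exact ⟨0, 1, by push_cast; ring⟩

lemma pairModule_mul_self (h : a * s ^ 2 + b * s + c = 0)
    (hu : ∃ u v w : ℤ, u * a + v * b + w * c = 1) :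
    pairModule (a * s) * pairModule (a * s) = pairModule (a * s) := by
  conv_lhs => rw [← pairModule_mul_span_pair h hu, ← mul_assoc, pairModule_mul_span_pair h hu,
    pairModule_mul_pairModule h]
  exact pairModule_mul_span_pair h hu

end QuadraticModules

/-! ### Conjugate lattices -/

lemma exists_g₂_eq_and_g₃_eq_map (σ : ℂ →+* ℂ) (L : PeriodPair) :
    ∃ M : PeriodPair, M.g₂ = σ L.g₂ ∧ M.g₃ = σ L.g₃ := by
  apply exists_g₂_eq_and_g₃_eq
  have := (map_ne_zero σ).mpr (g₂_pow_sub_g₃_pow_ne_zero L)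
  rwa [map_sub, map_mul, map_pow, map_pow, map_ofNat] at this

/-- The conjugate of `L` by a (usually discontinuous) endomorphism `σ` of `ℂ`: a pair of periods
of the conjugate elliptic curve `y² = 4x³ - σ(g₂)x - σ(g₃)`. Only its lattice is canonical. -/
def conjLattice (σ : ℂ →+* ℂ) (L : PeriodPair) : PeriodPair :=
  (exists_g₂_eq_and_g₃_eq_map σ L).choose

section ConjLattice

variable (σ : ℂ →+* ℂ) (L : PeriodPair)

lemma g₂_conjLattice : (conjLattice σ L).g₂ = σ L.g₂ :=
  (exists_g₂_eq_and_g₃_eq_map σ L).choose_spec.1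

lemma g₃_conjLattice : (conjLattice σ L).g₃ = σ L.g₃ :=
  (exists_g₂_eq_and_g₃_eq_map σ L).choose_spec.2

lemma jInvariant_conjLattice : jInvariant (conjLattice σ L) = σ (jInvariant L) := by
  simp only [jInvariant, g₂_conjLattice, g₃_conjLattice, map_div₀, map_sub, map_mul, map_pow,
    map_ofNat]

lemma lattice_conjLattice_scale (α : ℂ) (hα : α ≠ 0) :
    (conjLattice σ (scale α hα L)).lattice =
      Submodule.span ℤ {σ α} * (conjLattice σ L).lattice := by
  rw [← lattice_scale (σ α) ((map_ne_zero σ).mpr hα)]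
  apply lattice_eq_of_g₂_eq_of_g₃_eq
  · simp [g₂_conjLattice, g₂_scale]
  · simp [g₃_conjLattice, g₃_scale]

end ConjLattice

section RingEquiv

variable (σ : ℂ ≃+* ℂ) {L M : PeriodPair}

lemma lattice_conjLattice_le_iff :
    (conjLattice σ L).lattice ≤ (conjLattice σ M).lattice ↔ L.lattice ≤ M.lattice :=
  ⟨lattice_le_of_ringHom σ.symm.toRingHom (by simp [g₂_conjLattice]) (by simp [g₃_conjLattice])
    (by simp [g₂_conjLattice]) (by simp [g₃_conjLattice]),
  lattice_le_of_ringHom σ.toRingHom (g₂_conjLattice σ L) (g₃_conjLattice σ L)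
    (g₂_conjLattice σ M) (g₃_conjLattice σ M)⟩

lemma mem_div_iff_span_mul_le {R A : Type*} [CommSemiring R] [CommSemiring A] [Algebra R A]
    {I J : Submodule R A} {x : A} : x ∈ I / J ↔ Submodule.span R {x} * J ≤ I := by
  rw [← Submodule.le_div_iff_mul_le, Submodule.span_singleton_le_iff_mem]

lemma map_mem_div_conjLattice {x : ℂ} :
    σ x ∈ (conjLattice σ L).lattice / (conjLattice σ M).lattice ↔ x ∈ L.lattice / M.lattice := by
  rcases eq_or_ne x 0 with rfl | hx
  · simp
  have hscale := lattice_conjLattice_scale σ M x hx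
  rw [RingHom.coe_coe] at hscale
  rw [mem_div_iff_span_mul_le, mem_div_iff_span_mul_le, ← hscale, lattice_conjLattice_le_iff,
    lattice_scale]

lemma conjLattice_div_conjLattice (hσ : ∀ x ∈ L.lattice / M.lattice, σ x = x) :
    (conjLattice σ L).lattice / (conjLattice σ M).lattice = L.lattice / M.lattice := by
  ext x
  rw [← σ.apply_symm_apply x, map_mem_div_conjLattice]
  constructor <;> intro hx
  · rwa [hσ _ hx]
  · rw [σ.apply_symm_apply] at hx
    rwa [← hσ x hx, σ.symm_apply_apply]

end RingEquiv

/-! ### Complex multiplication -/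

section ComplexMultiplication

lemma jInvariant_eq_of_lattice_eq_span_mul {L M : PeriodPair} {α : ℂ} (hα : α ≠ 0)
    (h : L.lattice = Submodule.span ℤ {α} * M.lattice) : jInvariant L = jInvariant M := by
  rw [← lattice_scale α hα] at h
  rw [jInvariant_congr h, jInvariant_scale]

lemma lattice_ofUpperHalfPlane (τ : ℍ) : (ofUpperHalfPlane τ).lattice = pairModule (τ : ℂ) := rfl

lemma span_singleton_inv_mul {R K : Type*} [CommSemiring R] [Field K] [Algebra R K] {α : K}
    (hα : α ≠ 0) : Submodule.span R {α⁻¹} * Submodule.span R {α} = 1 := by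
  rw [Submodule.span_mul_span, Set.singleton_mul_singleton, inv_mul_cancel₀ hα,
    Submodule.one_eq_span]

lemma span_singleton_mul_div {R K : Type*} [CommSemiring R] [Field K] [Algebra R K] {α : K}
    (hα : α ≠ 0) (I : Submodule R K) :
    Submodule.span R {α} * I / (Submodule.span R {α} * I) = I / I := by
  ext x
  rw [mem_div_iff_span_mul_le, mem_div_iff_span_mul_le, mul_left_comm]
  refine ⟨fun h => ?_, fun h => mul_le_mul_right h _⟩
  simpa only [← mul_assoc, span_singleton_inv_mul hα, one_mul] using
    mul_le_mul_right h (Submodule.span R {α⁻¹})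

variable {L : PeriodPair} {t : ℂ}

lemma exists_lattice_eq_span_mul_pairModule (ht : t.im ≠ 0) (htL : t ∈ L.lattice / L.lattice) :
    ∃ (α : ℂ) (s : ℍ), α ≠ 0 ∧ L.lattice = Submodule.span ℤ {α} * pairModule (s : ℂ) ∧
      IsQuadratic (s : ℂ) ∧ ∃ r u : ℤ, r ≠ 0 ∧ t = r * s + u := by
  obtain ⟨α, hα, s, h⟩ := exists_eq_scale_ofUpperHalfPlane L
  rw [lattice_scale, lattice_ofUpperHalfPlane] at h
  refine ⟨α, s, hα, h, isQuadratic_of_mem_pairModule_div ?_ ?_⟩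
  · rintro ⟨n, rfl⟩
    simp at ht
  · rwa [h, span_singleton_mul_div hα] at htL

lemma exists_lattice_mul_eq_div_self (ht : t.im ≠ 0) (htL : t ∈ L.lattice / L.lattice) :
    ∃ J, L.lattice * J = L.lattice / L.lattice := by
  obtain ⟨α, s, hα, hL, hs, -⟩ := exists_lattice_eq_span_mul_pairModule ht htL
  obtain ⟨a, b, c, -, habc, hbez⟩ := hs.exists_primitive
  let J := Submodule.span ℤ {α⁻¹} * Submodule.span ℤ {(a : ℂ), b + a * (s : ℂ)}
  have hLJ : L.lattice * J = pairModule (a * (s : ℂ)) := by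
    rw [hL, mul_comm, mul_mul_mul_comm, span_singleton_inv_mul hα, one_mul, mul_comm,
      pairModule_mul_span_pair habc hbez]
  refine ⟨J, (div_eq_mul_of_mul_eq ?_ ?_).symm⟩
  · exact hLJ ▸ one_le_pairModule _
  · rw [hLJ, hL, mul_left_comm, pairModule_mul_pairModule habc]

lemma map_eq_self_of_mem_pairModule {A F : Type*} [CommRing A] [FunLike F A A]
    [RingHomClass F A A] {σ : F} {s : A} (hs : σ s = s) : ∀ x ∈ pairModule s, σ x = x := by
  intro x hx
  obtain ⟨m, n, rfl⟩ := mem_pairModule.mp hx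
  simp [hs]

variable {σ σ' : ℂ ≃+* ℂ} {t : ℍ}

theorem lattice_conjLattice_eq_mul
    (hO : pairModule (t : ℂ) * pairModule (t : ℂ) = pairModule (t : ℂ)) (hσt : σ t = t)
    (hL : pairModule (t : ℂ) * L.lattice = L.lattice) (hσL : ∀ x ∈ L.lattice, σ x = x) :
    (conjLattice σ L).lattice = L.lattice * (conjLattice σ (ofUpperHalfPlane t)).lattice := by
  set O := pairModule (t : ℂ)
  set E := (conjLattice σ (ofUpperHalfPlane t)).lattice
  have hO1 : 1 ≤ O := one_le_pairModule _
  have hσO : ∀ x ∈ O, σ x = x := map_eq_self_of_mem_pairModule hσt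
  have div_E {M : PeriodPair} (hM : O * M.lattice = M.lattice) (hσM : ∀ x ∈ M.lattice, σ x = x) :
      (conjLattice σ M).lattice / E = M.lattice := by
    have hdiv : M.lattice / (ofUpperHalfPlane t).lattice = M.lattice :=
      div_eq_self_of_mul_eq hO1 hM
    rw [conjLattice_div_conjLattice, hdiv]
    rwa [hdiv]
  have hEE : E / E = O := div_E hO hσO
  obtain ⟨J, hJ⟩ := exists_lattice_mul_eq_div_self t.im_pos.ne'
    (hEE ▸ self_mem_pairModule _ : (t : ℂ) ∈ E / E)
  replace hJ : E * J = O := hJ.trans hEE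
  have hOL : O * (conjLattice σ L).lattice = (conjLattice σ L).lattice := by
    refine le_antisymm (Submodule.le_div_iff_mul_le.mp fun x hx => ?_) (le_mul_of_one_le_left' hO1)
    rw [← hσO x hx, map_mem_div_conjLattice]
    exact Submodule.le_div_iff_mul_le.mpr hL.le hx
  have hLJ : (conjLattice σ L).lattice * J = L.lattice := by
    rw [← div_eq_mul_of_mul_eq (hJ ▸ hO1) (hJ ▸ hOL), div_E hL hσL]
  calc (conjLattice σ L).lattice = E * J * (conjLattice σ L).lattice := by rw [hJ, hOL]
    _ = (conjLattice σ L).lattice * J * E := by ring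
    _ = L.lattice * E := by rw [hLJ]

lemma exists_lattice_eq_mul_mul_conjLattice
    (hO : pairModule (t : ℂ) * pairModule (t : ℂ) = pairModule (t : ℂ))
    (hσ : σ t = t) (hσ' : σ' t = t) (hL : pairModule (t : ℂ) * L.lattice = L.lattice)
    (hσL : ∀ x ∈ L.lattice, σ x = x) (hσ'L : ∀ x ∈ L.lattice, σ' x = x) :
    ∃ P : PeriodPair, jInvariant P = σ' (σ (jInvariant L)) ∧
      P.lattice = L.lattice * (conjLattice σ (ofUpperHalfPlane t)).lattice *
        (conjLattice σ' (ofUpperHalfPlane t)).lattice := by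
  have hOE : (t : ℂ) ∈ (conjLattice σ (ofUpperHalfPlane t)).lattice /
      (conjLattice σ (ofUpperHalfPlane t)).lattice := by
    rw [← hσ, map_mem_div_conjLattice, lattice_ofUpperHalfPlane]
    exact Submodule.le_div_iff_mul_le.mpr hO.le (self_mem_pairModule _)
  obtain ⟨α, s, hα, hE, -, r, u, hr, hts⟩ :=
    exists_lattice_eq_span_mul_pairModule t.im_pos.ne' hOE
  have hσ's : σ' s = s := by
    rw [hts, map_add, map_mul, map_intCast, map_intCast, add_left_inj] at hσ'
    exact mul_left_cancel₀ (Int.cast_ne_zero.mpr hr) hσ'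
  let Q := scale α⁻¹ (inv_ne_zero hα) (conjLattice σ L)
  have hQ : Q.lattice = L.lattice * pairModule (s : ℂ) := by
    rw [lattice_scale, lattice_conjLattice_eq_mul hO hσ hL hσL, hE, mul_left_comm L.lattice,
      ← mul_assoc, span_singleton_inv_mul hα, one_mul]
  have hσ'Q : ∀ x ∈ Q.lattice, σ' x = x := by
    intro x hx
    rw [hQ] at hx
    induction hx using Submodule.mul_induction_on' with
    | mem_mul_mem m hm n hn =>
      rw [map_mul, hσ'L m hm, map_eq_self_of_mem_pairModule hσ's n hn]
    | add x _ y _ hx hy => rw [map_add, hx, hy]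
  refine ⟨scale α hα (conjLattice σ' Q), ?_, ?_⟩
  · rw [jInvariant_scale, jInvariant_conjLattice, jInvariant_scale, jInvariant_conjLattice]
    rfl
  · rw [lattice_scale, lattice_conjLattice_eq_mul hO hσ' (by rw [hQ, ← mul_assoc, hL]) hσ'Q, hQ, hE]
    ring

lemma exists_pairModule_mul_self {τ : ℍ} (hτ : IsQuadratic (τ : ℂ)) :
    ∃ t : ℍ, (∃ a : ℤ, (t : ℂ) = a * τ) ∧
      pairModule (t : ℂ) * pairModule (t : ℂ) = pairModule (t : ℂ) ∧
      pairModule (t : ℂ) * pairModule (τ : ℂ) = pairModule (τ : ℂ) := by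
  obtain ⟨a, b, c, ha, habc, hbez⟩ := hτ.exists_primitive
  refine ⟨⟨a * τ, ?_⟩, ⟨a, rfl⟩, pairModule_mul_self habc hbez, pairModule_mul_pairModule habc⟩
  simpa using mul_pos (Int.cast_pos.mpr ha) τ.im_pos

theorem map_map_jFunction_comm {τ : ℍ} (hτ : IsQuadratic (τ : ℂ)) (hσ : σ τ = τ)
    (hσ' : σ' τ = τ) : σ (σ' (JPaper.jFunction τ)) = σ' (σ (JPaper.jFunction τ)) := by
  obtain ⟨t, ⟨a, hta⟩, hO, hL⟩ := exists_pairModule_mul_self hτ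
  have map_t {ρ : ℂ ≃+* ℂ} (hρ : ρ τ = τ) : ρ t = t := by rw [hta, map_mul, hρ, map_intCast]
  have map_L {ρ : ℂ ≃+* ℂ} (hρ : ρ τ = τ) : ∀ x ∈ (ofUpperHalfPlane τ).lattice, ρ x = x :=
    map_eq_self_of_mem_pairModule hρ
  obtain ⟨P, hP, hPL⟩ := exists_lattice_eq_mul_mul_conjLattice
    (L := ofUpperHalfPlane τ) hO (map_t hσ') (map_t hσ) hL (map_L hσ') (map_L hσ)
  obtain ⟨P', hP', hPL'⟩ := exists_lattice_eq_mul_mul_conjLattice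
    (L := ofUpperHalfPlane τ) hO (map_t hσ) (map_t hσ') hL (map_L hσ) (map_L hσ')
  rw [jFunction_eq_jInvariant, ← hP, ← hP']
  exact jInvariant_congr (by rw [hPL, hPL', mul_right_comm])

theorem exists_isQuadratic_map_jFunction {τ : ℍ} (hτ : IsQuadratic (τ : ℂ)) (hσ : σ τ = τ) :
    ∃ s : ℍ, IsQuadratic (s : ℂ) ∧ σ (JPaper.jFunction τ) = JPaper.jFunction s := by
  obtain ⟨t, ⟨a, hta⟩, -, hL⟩ := exists_pairModule_mul_self hτ
  have ht : σ t = t := by rw [hta, map_mul, hσ, map_intCast]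
  have htL : (t : ℂ) ∈ (conjLattice σ (ofUpperHalfPlane τ)).lattice /
      (conjLattice σ (ofUpperHalfPlane τ)).lattice := by
    rw [← ht, map_mem_div_conjLattice]
    exact Submodule.le_div_iff_mul_le.mpr hL.le (self_mem_pairModule _)
  obtain ⟨α, s, hα, hs, hquad, -⟩ := exists_lattice_eq_span_mul_pairModule t.im_pos.ne' htL
  refine ⟨s, hquad, ?_⟩
  rw [jFunction_eq_jInvariant, jFunction_eq_jInvariant, ← RingHom.coe_coe σ,
    ← jInvariant_conjLattice]
  exact jInvariant_eq_of_lattice_eq_span_mul hα hs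

end ComplexMultiplication

/-! ### Quadratic numbers are cyclotomic -/

lemma mem_Qcyc_of_pow_eq_one {z : ℂ} {n : ℕ} (hn : 0 < n) (h : z ^ n = 1) : z ∈ JPaper.Qcyc :=
  Subfield.subset_closure ⟨n, hn, h⟩

lemma I_mem_Qcyc : Complex.I ∈ JPaper.Qcyc :=
  mem_Qcyc_of_pow_eq_one (n := 4) (by norm_num) Complex.I_pow_four

lemma exists_mem_Qcyc_sq_eq_two : ∃ x ∈ JPaper.Qcyc, x ^ 2 = 2 := by
  obtain ⟨ζ, hζ⟩ := IsAlgClosed.exists_pow_nat_eq Complex.I (n := 2) (by norm_num)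
  have hζ8 : ζ ^ 8 = 1 := by
    rw [show ζ ^ 8 = (ζ ^ 2) ^ 4 by ring, hζ, Complex.I_pow_four]
  have hmem := mem_Qcyc_of_pow_eq_one (by norm_num) hζ8
  have hζ0 : ζ ≠ 0 := by
    rintro rfl
    simp at hζ8
  refine ⟨ζ + ζ⁻¹, add_mem hmem (inv_mem hmem), ?_⟩
  rw [add_sq, inv_pow, hζ, mul_assoc, mul_inv_cancel₀ hζ0, Complex.inv_I]
  ring

lemma gaussSum_stdAddChar_mem_Qcyc {n : ℕ} [NeZero n] {χ : MulChar (ZMod n) ℂ}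
    (hχ : ∀ a, χ a ∈ JPaper.Qcyc) : gaussSum χ ZMod.stdAddChar ∈ JPaper.Qcyc := by
  refine sum_mem fun a _ => mul_mem (hχ a) (mem_Qcyc_of_pow_eq_one (NeZero.pos n) ?_)
  rw [← AddChar.map_nsmul_eq_pow]
  simp

lemma exists_mem_Qcyc_sq_eq_prime {p : ℕ} (hp : p.Prime) (hp2 : p ≠ 2) :
    ∃ x ∈ JPaper.Qcyc, x ^ 2 = (p : ℂ) := by
  have : Fact p.Prime := ⟨hp⟩
  let χ : MulChar (ZMod p) ℂ := (quadraticChar (ZMod p)).ringHomComp (Int.castRingHom ℂ)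
  have hχ₂ : χ.IsQuadratic := (quadraticChar_isQuadratic (ZMod p)).comp _
  have hχ₁ : χ ≠ 1 := (MulChar.ringHomComp_ne_one_iff Int.cast_injective).mpr
    (quadraticChar_ne_one (by rwa [ZMod.ringChar_zmod_n]))
  have hsq : gaussSum χ ZMod.stdAddChar ^ 2 = χ (-1) * p := by
    rw [gaussSum_sq hχ₁ hχ₂ (ZMod.isPrimitive_stdAddChar p), ZMod.card]
  have hmem : gaussSum χ ZMod.stdAddChar ∈ JPaper.Qcyc :=
    gaussSum_stdAddChar_mem_Qcyc fun _ => intCast_mem _ _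
  rcases hχ₂ (-1) with h | h | h
  · exact absurd h (IsUnit.map χ isUnit_one.neg).ne_zero
  · exact ⟨_, hmem, by rw [hsq, h, one_mul]⟩
  · exact ⟨_, mul_mem I_mem_Qcyc hmem, by rw [mul_pow, hsq, h, Complex.I_sq]; ring⟩

lemma exists_mem_Qcyc_sq_eq_natCast (n : ℕ) : ∃ x ∈ JPaper.Qcyc, x ^ 2 = (n : ℂ) := by
  induction n using induction_on_primes with
  | zero => exact ⟨0, zero_mem _, by simp⟩
  | one => exact ⟨1, one_mem _, by simp⟩
  | prime_mul p a hp ih =>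
    obtain ⟨x, hx, hx2⟩ : ∃ x ∈ JPaper.Qcyc, x ^ 2 = (p : ℂ) := by
      rcases eq_or_ne p 2 with rfl | hp2
      · exact_mod_cast exists_mem_Qcyc_sq_eq_two
      · exact exists_mem_Qcyc_sq_eq_prime hp hp2
    obtain ⟨y, hy, hy2⟩ := ih
    exact ⟨x * y, mul_mem hx hy, by rw [mul_pow, hx2, hy2, Nat.cast_mul]⟩

lemma mem_Qcyc_of_sq_eq_intCast {z : ℂ} {n : ℤ} (h : z ^ 2 = n) : z ∈ JPaper.Qcyc := by
  obtain ⟨x, hx, hx2⟩ : ∃ x ∈ JPaper.Qcyc, x ^ 2 = (n : ℂ) := by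
    obtain ⟨x, hx, hx2⟩ := exists_mem_Qcyc_sq_eq_natCast n.natAbs
    rcases Int.natAbs_eq n with hn | hn
    · exact ⟨x, hx, by rw [hx2, hn]; simp⟩
    · exact ⟨Complex.I * x, mul_mem I_mem_Qcyc hx, by
        rw [mul_pow, hx2, Complex.I_sq, hn]; simp⟩
  rcases sq_eq_sq_iff_eq_or_eq_neg.mp (h.trans hx2.symm) with rfl | rfl
  · exact hx
  · exact neg_mem hx

theorem mem_Qcyc_of_isQuadratic {z : ℂ} (hz : IsQuadratic z) : z ∈ JPaper.Qcyc := by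
  obtain ⟨a, b, c, ha, h⟩ := hz
  have ha' : (a : ℂ) ≠ 0 := by exact_mod_cast ha
  have hsq : (2 * a * z + b) ^ 2 = ((b ^ 2 - 4 * a * c : ℤ) : ℂ) := by
    push_cast
    linear_combination 4 * a * h
  have hmem := mem_Qcyc_of_sq_eq_intCast hsq
  have hz : z = (2 * a * z + b - b) / (2 * a) := by field_simp; ring
  rw [hz]
  exact div_mem (sub_mem hmem (intCast_mem _ _)) (mul_mem (ofNat_mem _ 2) (intCast_mem _ _))

/-! ### Special points are the imaginary quadratic points -/

section Special

open JPaper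

/-- The element of `GL₂⁺(ℚ)` given by a matrix of positive determinant. -/
def glPosMk (A : Matrix (Fin 2) (Fin 2) ℚ) (hA : 0 < A.det) : GL2QPos :=
  ⟨Matrix.GeneralLinearGroup.mkOfDetNeZero A hA.ne', by
    rwa [Matrix.mem_glpos, Matrix.GeneralLinearGroup.val_det_apply]⟩

lemma coe_glPosMk (A : Matrix (Fin 2) (Fin 2) ℚ) (hA : 0 < A.det) :
    ((glPosMk A hA : GL (Fin 2) ℚ) : Matrix (Fin 2) (Fin 2) ℚ) = A := rfl

lemma mem_center_GL2QPos_iff {g : GL2QPos} :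
    g ∈ Subgroup.center GL2QPos ↔ (g : GL (Fin 2) ℚ) 0 1 = 0 ∧ (g : GL (Fin 2) ℚ) 1 0 = 0 ∧
      (g : GL (Fin 2) ℚ) 0 0 = (g : GL (Fin 2) ℚ) 1 1 := by
  have eq_iff {x y : GL2QPos} : x = y ↔
      ((x : GL (Fin 2) ℚ) : Matrix (Fin 2) (Fin 2) ℚ) = (y : GL (Fin 2) ℚ) := by
    rw [← Units.ext_iff, SetLike.coe_eq_coe]
  simp only [Subgroup.mem_center_iff, eq_iff, Subgroup.coe_mul, Units.val_mul]
  constructor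
  · intro h
    have hU := h (glPosMk !![1, 1; 0, 1] (by simp))
    have hV := h (glPosMk !![1, 0; 1, 1] (by simp))
    have hU00 := congrFun (congrFun hU 0) 0
    have hU01 := congrFun (congrFun hU 0) 1
    have hV00 := congrFun (congrFun hV 0) 0
    simp only [coe_glPosMk, Fin.isValue, Matrix.mul_apply, of_apply, cons_val', cons_val_fin_one,
      cons_val_zero, Fin.sum_univ_two, one_mul, cons_val_one, mul_one, mul_zero, add_zero,
      add_eq_left, zero_mul, left_eq_add] at hU00 hU01 hV00
    exact ⟨hV00, hU00, by linarith⟩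
  · rintro ⟨h01, h10, h00⟩ x
    ext i j
    fin_cases i <;> fin_cases j <;>
      simp [Matrix.mul_apply, Fin.sum_univ_two, h01, h10, h00, mul_comm]

lemma toGLPosR_smul_eq_iff (g : GL2QPos) (τ : ℍ) :
    toGLPosR g • τ = τ ↔ (((g : GL (Fin 2) ℚ) 1 0 : ℚ) : ℂ) * (τ : ℂ) ^ 2 +
      (((g : GL (Fin 2) ℚ) 1 1 - (g : GL (Fin 2) ℚ) 0 0 : ℚ) : ℂ) * τ +
        ((-(g : GL (Fin 2) ℚ) 0 1 : ℚ) : ℂ) = 0 := by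
  have hdet : 0 < ((toGLPosR g : GL (Fin 2) ℝ).det : ℝ) := (toGLPosR g).2
  have hden := denom_ne_zero (toGLPosR g : GL (Fin 2) ℝ) τ
  have hentry (i j) : (toGLPosR g : GL (Fin 2) ℝ) i j = (((g : GL (Fin 2) ℚ) i j : ℚ) : ℝ) := rfl
  rw [← UpperHalfPlane.coe_inj, Subgroup.smul_def, coe_smul_of_det_pos hdet, div_eq_iff hden]
  simp only [num, denom, hentry, Complex.ofReal_ratCast]
  push_cast
  constructor <;> intro h <;> linear_combination -h

lemma gqSmul_mk (g : GL2QPos) (τ : ℍ) : gqSmul (QuotientGroup.mk g) τ = toGLPosR g • τ := by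
  obtain ⟨z, hz⟩ := QuotientGroup.mk_out_eq_mul (Subgroup.center GL2QPos) g
  obtain ⟨h01, h10, h00⟩ := mem_center_GL2QPos_iff.mp z.2
  have hzτ : toGLPosR z • τ = τ := by
    rw [toGLPosR_smul_eq_iff, h01, h10, h00]
    simp
  rw [gqSmul, hz, map_mul, mul_smul, hzτ]

lemma isSpecial_iff_exists_notMem_center {τ : ℍ} :
    IsSpecial τ ↔ ∃ g ∉ Subgroup.center GL2QPos, toGLPosR g • τ = τ := by
  rw [IsSpecial, (QuotientGroup.mk_surjective).exists]
  simp only [gqSmul_mk, ne_eq, QuotientGroup.eq_one_iff]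

lemma isQuadratic_of_ratCast {A : Type*} [Field A] [CharZero A] {z : A} {p q r : ℚ} (hp : p ≠ 0)
    (h : p * z ^ 2 + q * z + r = 0) : IsQuadratic z := by
  have hden (x : ℚ) : (x.num : A) = x.den * x := by exact_mod_cast (Rat.den_mul_eq_num x).symm
  refine ⟨p.num * q.den * r.den, q.num * p.den * r.den, r.num * p.den * q.den, by simp [hp], ?_⟩
  push_cast
  rw [hden, hden, hden]
  linear_combination ((p.den : A) * q.den * r.den) * h

lemma eq_zero_of_ratCast_mul_add_eq_zero {z : ℂ} (hz : z.im ≠ 0) {p q : ℚ} (h : p * z + q = 0) :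
    p = 0 ∧ q = 0 := by
  have hp : p = 0 := by simpa [hz] using congrArg Complex.im h
  subst hp
  simpa using h

lemma mul_pos_of_quadratic_eq_zero {z : ℂ} (hz : z.im ≠ 0) {a b c : ℝ} (ha : a ≠ 0)
    (h : a * z ^ 2 + b * z + c = 0) : 0 < a * c := by
  have hre := congrArg Complex.re h
  have him := congrArg Complex.im h
  simp only [pow_two, Complex.add_re, Complex.mul_re, Complex.add_im, Complex.mul_im,
    Complex.ofReal_re, Complex.ofReal_im, Complex.zero_re, Complex.zero_im] at hre him
  have hb : 2 * a * z.re + b = 0 := mul_right_cancel₀ hz (by linear_combination him)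
  have hac : a * c = a ^ 2 * (z.re ^ 2 + z.im ^ 2) := by
    linear_combination a * hre - a * z.re * hb
  rw [hac]
  positivity

theorem isSpecial_iff_isQuadratic {τ : ℍ} : IsSpecial τ ↔ IsQuadratic (τ : ℂ) := by
  rw [isSpecial_iff_exists_notMem_center]
  constructor
  · rintro ⟨g, hg, hτ⟩
    rw [toGLPosR_smul_eq_iff] at hτ
    refine isQuadratic_of_ratCast (fun h10 => hg ?_) hτ
    rw [h10, Rat.cast_zero, zero_mul, zero_add] at hτ
    obtain ⟨h00, h01⟩ := eq_zero_of_ratCast_mul_add_eq_zero τ.im_pos.ne' hτ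
    exact mem_center_GL2QPos_iff.mpr ⟨neg_eq_zero.mp h01, h10, (sub_eq_zero.mp h00).symm⟩
  · rintro ⟨a, b, c, ha, h⟩
    have hac : (0 : ℝ) < a * c :=
      mul_pos_of_quadratic_eq_zero τ.im_pos.ne' (Int.cast_ne_zero.mpr ha) (by exact_mod_cast h)
    have hdet : (!![-(b : ℚ), -c; a, 0]).det = ((a * c : ℤ) : ℚ) := by
      simp [Matrix.det_fin_two_of, mul_comm]
    refine ⟨glPosMk !![-(b : ℚ), -c; a, 0] (hdet ▸ by exact_mod_cast hac), fun hg => ha ?_, ?_⟩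
    · have h10 : (a : ℚ) = 0 := (mem_center_GL2QPos_iff.mp hg).2.1
      exact_mod_cast h10
    · rw [toGLPosR_smul_eq_iff, coe_glPosMk]
      simpa using h

end Special

/-! ### Automorphisms of uncountable algebraically closed fields -/

section Automorphism

open Cardinal

instance countable_polynomial {R : Type*} [CommRing R] [Countable R] : Countable R[X] := by
  rw [← mk_le_aleph0_iff]
  exact Polynomial.cardinalMk_le_max.trans (max_le mk_le_aleph0 le_rfl)

universe u v

theorem exists_algEquiv_of_isAlgClosed {R : Type*} {K : Type u} {L : Type v} [CommRing R]
    [Countable R] [Field K] [Field L] [Algebra R K] [Algebra R L] [FaithfulSMul R K]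
    [FaithfulSMul R L] [IsAlgClosed K] [IsAlgClosed L] [Uncountable K] (e : K ≃ L) :
    Nonempty (K ≃ₐ[R] L) := by
  have : Nontrivial R := (algebraMap R K).domain_nontrivial
  have : Uncountable L := e.symm.surjective.uncountable
  obtain ⟨s, hs⟩ := exists_isTranscendenceBasis R K
  obtain ⟨t, ht⟩ := exists_isTranscendenceBasis R L
  have hst : lift.{v} #s = lift.{u} #t := by
    rw [← lift_injective (IsAlgClosed.cardinal_eq_cardinal_transcendence_basis_of_aleph0_lt _ hs
        mk_le_aleph0 aleph0_lt_mk),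
      ← lift_injective (IsAlgClosed.cardinal_eq_cardinal_transcendence_basis_of_aleph0_lt _ ht
        mk_le_aleph0 aleph0_lt_mk)]
    exact lift_mk_eq'.mpr ⟨e⟩
  obtain ⟨e'⟩ := lift_mk_eq'.mp hst
  have := IsAlgClosed.isAlgClosure_of_transcendence_basis _ hs
  have := IsAlgClosed.isAlgClosure_of_transcendence_basis _ ht
  let φ : Algebra.adjoin R (Set.range ((↑) : s → K)) ≃ₐ[R]
      Algebra.adjoin R (Set.range ((↑) : t → L)) :=
    hs.1.aevalEquiv.symm.trans ((MvPolynomial.renameEquiv R e').trans ht.1.aevalEquiv)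
  refine ⟨AlgEquiv.ofRingEquiv (f := IsAlgClosure.equivOfEquiv K L φ.toRingEquiv) fun r => ?_⟩
  rw [IsScalarTower.algebraMap_apply R (Algebra.adjoin R (Set.range ((↑) : s → K))) K,
    IsAlgClosure.equivOfEquiv_algebraMap]
  change algebraMap _ L (φ (algebraMap R _ r)) = _
  rw [φ.commutes, ← IsScalarTower.algebraMap_apply]

theorem exists_ringEquiv_comp_eq {R K L : Type*} [CommRing R] [Countable R] [Field K] [Field L]
    [IsAlgClosed K] [IsAlgClosed L] [Uncountable K] (e : K ≃ L) {f : R →+* K} {g : R →+* L}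
    (hf : Function.Injective f) (hg : Function.Injective g) :
    ∃ φ : K ≃+* L, ∀ r, φ (f r) = g r := by
  let _ := f.toAlgebra
  let _ := g.toAlgebra
  have := (faithfulSMul_iff_algebraMap_injective R K).mpr hf
  have := (faithfulSMul_iff_algebraMap_injective R L).mpr hg
  obtain ⟨φ⟩ := exists_algEquiv_of_isAlgClosed (R := R) e
  exact ⟨φ.toRingEquiv, φ.commutes⟩

section Field

variable {F Ω : Type*} [Field F] [Field Ω] [Algebra F Ω] [IsAlgClosed Ω] [Uncountable Ω]

theorem exists_algEquiv_comp_eq {R : Type*} [CommRing R] [Countable R] [Algebra F R]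
    {f g : R →ₐ[F] Ω} (hf : Function.Injective f) (hg : Function.Injective g) :
    ∃ φ : Ω ≃ₐ[F] Ω, ∀ r, φ (f r) = g r := by
  obtain ⟨φ, hφ⟩ := exists_ringEquiv_comp_eq (Equiv.refl Ω) (f := f.toRingHom) (g := g.toRingHom)
    hf hg
  refine ⟨AlgEquiv.ofRingEquiv (f := φ) fun x => ?_, hφ⟩
  calc φ (algebraMap F Ω x) = φ (f (algebraMap F R x)) := by rw [f.commutes]
    _ = g (algebraMap F R x) := hφ _
    _ = algebraMap F Ω x := g.commutes x

theorem exists_algEquiv_apply_eq_of_transcendental [Countable F] {x y : Ω}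
    (hx : Transcendental F x) (hy : Transcendental F y) : ∃ φ : Ω ≃ₐ[F] Ω, φ x = y := by
  obtain ⟨φ, hφ⟩ := exists_algEquiv_comp_eq
    (transcendental_iff_injective.mp hx) (transcendental_iff_injective.mp hy)
  exact ⟨φ, by simpa using hφ X⟩

variable {K : Type*} [Field K] [Countable K] [Algebra F K] [Algebra K Ω] [IsScalarTower F K Ω]

theorem exists_algEquiv_apply_algebraMap_eq (f : K →ₐ[F] Ω) :
    ∃ φ : Ω ≃ₐ[F] Ω, ∀ x, φ (algebraMap K Ω x) = f x :=
  exists_algEquiv_comp_eq (f := IsScalarTower.toAlgHom F K Ω) (algebraMap K Ω).injective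
    f.injective

theorem exists_algEquiv_extending (σ : K ≃ₐ[F] K) :
    ∃ φ : Ω ≃ₐ[F] Ω, ∀ x, φ (algebraMap K Ω x) = algebraMap K Ω (σ x) :=
  exists_algEquiv_apply_algebraMap_eq ((IsScalarTower.toAlgHom F K Ω).comp σ.toAlgHom)

theorem isAlgebraic_of_forall_algEquiv_mem_range [Countable F]
    (h : ∀ (φ : Ω ≃ₐ[F] Ω) (x : K), φ (algebraMap K Ω x) ∈ (algebraMap K Ω).range) :
    Algebra.IsAlgebraic F K := by
  refine ⟨fun x => by_contra fun hx => ?_⟩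
  have hx' : Transcendental F (algebraMap K Ω x) :=
    mt (isAlgebraic_algebraMap_iff (algebraMap K Ω).injective).mp hx
  have hsub : {y : Ω | IsAlgebraic F y}ᶜ ⊆ Set.range (algebraMap K Ω) := by
    intro y hy
    obtain ⟨φ, rfl⟩ := exists_algEquiv_apply_eq_of_transcendental hx' hy
    exact h φ x
  refine Set.not_countable_univ (α := Ω) ?_
  rw [← Set.union_compl_self {y : Ω | IsAlgebraic F y}]
  exact (Algebraic.countable F Ω).union ((Set.countable_range _).mono hsub)

theorem isGalois_of_forall_algEquiv_mem_range [CharZero F]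
    (h : ∀ (φ : Ω ≃ₐ[F] Ω) (x : K), φ (algebraMap K Ω x) ∈ (algebraMap K Ω).range) :
    IsGalois F K := by
  have : Countable F := (algebraMap F K).injective.countable
  have : Algebra.IsAlgebraic F K := isAlgebraic_of_forall_algEquiv_mem_range h
  have : Normal F K := by
    refine ⟨fun x => Splits.of_splits_map (algebraMap K Ω) (IsAlgClosed.splits _) fun y hy => ?_⟩
    rw [Polynomial.map_map, ← IsScalarTower.algebraMap_eq] at hy
    obtain ⟨f, rfl⟩ := IntermediateField.exists_algHom_of_splits_of_aeval
      (fun s : K => ⟨Algebra.IsIntegral.isIntegral s, IsAlgClosed.splits _⟩)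
      ((mem_aroots.mp hy).2)
    obtain ⟨φ, hφ⟩ := exists_algEquiv_apply_algebraMap_eq f
    exact hφ x ▸ h φ x
  exact ⟨⟩

end Field

end Automorphism

/-! ### Galois theory of the singular moduli -/

section QcycJS

open JPaper

lemma IsQuadratic.isAlgebraic {A : Type*} [CommRing A] {z : A} (hz : IsQuadratic z) :
    IsAlgebraic ℤ z := by
  obtain ⟨a, b, c, ha, h⟩ := hz
  refine ⟨C a * X ^ 2 + C b * X + C c, fun h0 => ha ?_, by simpa using h⟩
  rw [← leadingCoeff_quadratic (b := b) (c := c) ha, h0, leadingCoeff_zero]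

lemma countable_specialSet : SpecialSet.Countable :=
  Set.MapsTo.countable_of_injOn (f := fun τ : ℍ => (τ : ℂ))
    (fun _ hτ => (isSpecial_iff_isQuadratic.mp hτ).isAlgebraic)
    UpperHalfPlane.coe_injective.injOn (Algebraic.countable ℤ ℂ)

lemma countable_rootsOfUnitySet : rootsOfUnitySet.Countable := by
  refine (Algebraic.countable ℤ ℂ).mono ?_
  rintro z ⟨n, hn, hz⟩
  exact (IsIntegral.of_pow hn (hz ▸ isIntegral_one)).isAlgebraic

lemma countable_subfield_closure {k : Type*} [Field k] {s : Set k} (hs : s.Countable) :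
    Countable (Subfield.closure s) := by
  rw [← Cardinal.mk_le_aleph0_iff]
  exact (Subfield.cardinalMk_closure_le_max s).trans (max_le hs.le_aleph0 le_rfl)

instance countable_QcycJS : Countable QcycJS :=
  countable_subfield_closure (countable_rootsOfUnitySet.union (countable_specialSet.image _))

lemma algebraMap_inclusion {k : Type*} [Field k] {F K : Subfield k} (h : F ≤ K) (x : F) :
    algebraMap K k (Subfield.inclusion h x) = algebraMap F k x := rfl

instance isScalarTower_Qcyc_QcycJS : IsScalarTower Qcyc QcycJS ℂ :=
  IsScalarTower.of_algebraMap_eq fun x => (algebraMap_inclusion Qcyc_le_QcycJS x).symm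

lemma algEquiv_apply_of_mem {k : Type*} [Field k] {F : Subfield k} (φ : k ≃ₐ[F] k) {x : k}
    (hx : x ∈ F) : φ x = x := φ.commutes ⟨x, hx⟩

lemma map_mem_jSpecialValues (φ : ℂ ≃ₐ[Qcyc] ℂ) {z : ℂ} (hz : z ∈ jSpecialValues) :
    φ z ∈ jSpecialValues := by
  obtain ⟨τ, hτ, rfl⟩ := hz
  have hτ' := isSpecial_iff_isQuadratic.mp hτ
  obtain ⟨s, hs, h⟩ := exists_isQuadratic_map_jFunction (σ := φ.toRingEquiv) hτ'
    (algEquiv_apply_of_mem φ (mem_Qcyc_of_isQuadratic hτ'))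
  exact ⟨s, isSpecial_iff_isQuadratic.mpr hs, h.symm⟩

lemma map_mem_QcycJS (φ : ℂ ≃ₐ[Qcyc] ℂ) {z : ℂ} (hz : z ∈ QcycJS) : φ z ∈ QcycJS := by
  suffices QcycJS ≤ QcycJS.comap (φ : ℂ →+* ℂ) from this hz
  refine Subfield.closure_le.mpr ?_
  rintro x (hx | hx)
  · have hx' : x ∈ Qcyc := Subfield.subset_closure hx
    change φ x ∈ QcycJS
    rw [algEquiv_apply_of_mem φ hx']
    exact Qcyc_le_QcycJS hx'
  · exact Subfield.subset_closure (Or.inr (map_mem_jSpecialValues φ hx))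

instance uncountable_complex : Uncountable ℂ :=
  Set.not_countable_univ_iff.mp not_countable_complex

theorem isGalois_Qcyc_QcycJS : IsGalois Qcyc QcycJS :=
  isGalois_of_forall_algEquiv_mem_range fun φ x => ⟨⟨_, map_mem_QcycJS φ x.2⟩, rfl⟩

theorem map_map_comm_of_mem_QcycJS (φ ψ : ℂ ≃ₐ[Qcyc] ℂ) {z : ℂ} (hz : z ∈ QcycJS) :
    φ (ψ z) = ψ (φ z) := by
  suffices Set.EqOn ((φ : ℂ →+* ℂ).comp (ψ : ℂ →+* ℂ)) ((ψ : ℂ →+* ℂ).comp (φ : ℂ →+* ℂ)) QcycJS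
    from this hz
  refine RingHom.eqOn_field_closure ?_
  rintro x (hx | ⟨τ, hτ, rfl⟩)
  · have hx' : x ∈ Qcyc := Subfield.subset_closure hx
    simp [algEquiv_apply_of_mem _ hx']
  · have hτ' := isSpecial_iff_isQuadratic.mp hτ
    have hfix (φ : ℂ ≃ₐ[Qcyc] ℂ) : φ τ = τ :=
      algEquiv_apply_of_mem φ (mem_Qcyc_of_isQuadratic hτ')
    exact map_map_jFunction_comm (σ := φ.toRingEquiv) (σ' := ψ.toRingEquiv) hτ' (hfix φ) (hfix ψ)

end QcycJS

end SingularModuli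

/-- Lemma `lem abelian`: the extension `ℚ^cyc(j(S)) / ℚ^cyc` is abelian,
where `j(S)` is the set of singular moduli (the `j`-invariants of the CM points of the
upper half plane) and `ℚ^cyc = ℚ(all roots of unity)`. -/
theorem QcycJS_abelian_over_Qcyc :
    IsGalois ↥JPaper.Qcyc ↥JPaper.QcycJS ∧
      ∀ σ τ : (↥JPaper.QcycJS ≃ₐ[↥JPaper.Qcyc] ↥JPaper.QcycJS), σ * τ = τ * σ := by
  refine ⟨SingularModuli.isGalois_Qcyc_QcycJS, fun σ τ => ?_⟩
  obtain ⟨φ, hφ⟩ := SingularModuli.exists_algEquiv_extending (Ω := ℂ) σ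
  obtain ⟨ψ, hψ⟩ := SingularModuli.exists_algEquiv_extending (Ω := ℂ) τ
  refine AlgEquiv.ext fun x => (algebraMap JPaper.QcycJS ℂ).injective ?_
  have hcomm : φ (ψ (algebraMap JPaper.QcycJS ℂ x)) = ψ (φ (algebraMap JPaper.QcycJS ℂ x)) :=
    SingularModuli.map_map_comm_of_mem_QcycJS φ ψ x.2
  rwa [hψ, hφ, hφ, hψ] at hcomm
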